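/- Let K ⊆ ℝ² be a compact convex set with nonempty interior whose boundary ∂K is a C² curve of strictly positive curvature, and suppose the origin 0 is the Santalo point of K. Let r : ℝ → ℝ be the (C², 2π-periodic, positive) radial function of ∂K, so ∂K = {r(φ)(cos φ, sin φ) : φ ∈ ℝ}, and set χ := r² + 2r′² − r r″ (> 0). Then ∫₀^{2π} √(χ(φ))/r(φ) dφ ≤ 2π, and equality holds if and only if ∂K is an ellipse, i.e. the image of the unit circle under an invertible affine map of ℝ². -/

import Mathlib

/-!
Write `u φ = (cos φ, sin φ)`. The function `h = 1 / r` is the support function of the polar dual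
`K° = K^0`, and `h + h'' = χ / r³`. Hence `|K| = ½ ∫ r²`, and `|K°| = ½ ∫ h (h + h'') = ½ ∫ χ / r⁴`
(only the inequalities `≥` are needed, `le_volume_of_star` and `le_volume_of_support`). As `0` is the
Santaló point, the Blaschke–Santaló inequality `|K| |K°| ≤ π²` holds, and the Cauchy–Schwarz
inequality for `√χ / r = (√χ / r²) r` gives
`(∫ √χ / r)² ≤ (∫ χ / r⁴) (∫ r²) = 4 |K| |K°| ≤ 4 π²`.

The Blaschke–Santaló inequality (`blaschke_santalo`) is obtained by quartering. Two lines cut `K`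
into four parts of equal area (`exists_quartering`); they cross at an interior point `z` of `K`.
The same two directions determine a dual partition of `K^z` into four sectors. For each pair of
corresponding parts `A ⊆ K - z` and `B ⊆ K^z`, an area-preserving linear map reduces matters to sets
in the positive quadrant with `⟨a, b⟩ ≤ 1`; there the substitution `s = exp x` turns the bound on
the lengths of vertical sections into the hypothesis of the one-dimensional Prékopa–Leindler
inequality, and `|A| |B| ≤ (π / 4)²` (`quadrant_bound`). Since `|K| = 4 |A|`, summing over the four
parts gives `|K| |K^z| ≤ π²`, and `|K^0| ≤ |K^z|` by the choice of `0`.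

Equality in the Cauchy–Schwarz inequality means `χ = t² r⁶` for a constant `t`. In terms of
`g = r⁻²` this is a second-order equation whose first integral turns it into
`g'' + 4 g = const`, so `g` is a quadratic form in `u φ` and `∂K` is an ellipse
(`exists_quadratic`, `isEllipse_of_quadratic`). Conversely, if `∂K` is an ellipse, comparing the
areas of the polar duals at its centre and at `0` shows that `0` is the centre (`center_eq_zero`).
Then `g` is a quadratic form `‖M (u φ)‖²`, `χ = (det M)² r⁶`, and the integral is
`|det M| ∫ r² = 2 |det M| |K| = 2 π`.
-/

open Real MeasureTheory Set

noncomputable section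

/-- Determinant of two plane vectors. -/
def detV (u v : ℝ × ℝ) : ℝ := u.1 * v.2 - u.2 * v.1

/-- The unit vector of polar angle `φ`. -/
def uVec (φ : ℝ) : ℝ × ℝ := (Real.cos φ, Real.sin φ)

/-- The boundary of `K` is a `C²` curve of strictly positive curvature, expressed through the
radial function `r` of `∂K` with respect to the interior point `O`. -/
def HasC2PosCurvBoundary (K : Set (ℝ × ℝ)) (O : ℝ × ℝ) (r : ℝ → ℝ) : Prop :=
  O ∈ interior K ∧ ContDiff ℝ 2 r ∧ (∀ φ, r (φ + 2 * π) = r φ) ∧ (∀ φ, 0 < r φ) ∧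
  (∀ φ, 0 < r φ ^ 2 + 2 * (deriv r φ) ^ 2 - r φ * deriv (deriv r) φ) ∧
  frontier K = {p | ∃ φ, p = O + r φ • uVec φ}

/-- `T` is the outer billiard map of `K`: for `A ∉ K`, the midpoint of `[A, T A]` lies on `∂K`,
the segment `[A, T A]` meets `K` exactly at this midpoint, and `K` lies to the left of the
oriented segment. -/
def IsOuterBilliard (K : Set (ℝ × ℝ)) (T : ℝ × ℝ → ℝ × ℝ) : Prop :=
  ∀ A, A ∉ K →
    T A ∉ K ∧
    (1 / 2 : ℝ) • (A + T A) ∈ frontier K ∧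
    segment ℝ A (T A) ∩ K = {(1 / 2 : ℝ) • (A + T A)} ∧
    ∀ k ∈ K, 0 ≤ detV (T A - A) (k - (1 / 2 : ℝ) • (A + T A))

/-- A set is an ellipse if it is the image of the unit circle under an invertible affine map. -/
def IsEllipse (C : Set (ℝ × ℝ)) : Prop :=
  ∃ (L : (ℝ × ℝ) →ₗ[ℝ] ℝ × ℝ) (c : ℝ × ℝ), Function.Bijective L ∧
    C = (fun x => c + L x) '' {x : ℝ × ℝ | x.1 ^ 2 + x.2 ^ 2 = 1}

/-- The polar dual of `C` with respect to `x`. -/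
def polarDual (C : Set (ℝ × ℝ)) (x : ℝ × ℝ) : Set (ℝ × ℝ) :=
  {y | ∀ c ∈ C, y.1 * (c.1 - x.1) + y.2 * (c.2 - x.2) ≤ 1}

/-- `x` is the Santalo point of `C`: the interior point minimizing the area of the polar dual. -/
def IsSantaloPoint (C : Set (ℝ × ℝ)) (x : ℝ × ℝ) : Prop :=
  x ∈ interior C ∧ ∀ y ∈ interior C, volume (polarDual C x) ≤ volume (polarDual C y)

/-- The data of a segment `[M₀, M₁]` with `Mᵢ` on the open ray of polar angle `φᵢ`,
tangent to `∂K` exactly at its midpoint. -/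
def SegData (K : Set (ℝ × ℝ)) (φ₀ φ₁ : ℝ) (M₀ M₁ : ℝ × ℝ) : Prop :=
  (∃ s > (0 : ℝ), M₀ = s • uVec φ₀) ∧ (∃ s > (0 : ℝ), M₁ = s • uVec φ₁) ∧
  (1 / 2 : ℝ) • (M₀ + M₁) ∈ frontier K ∧
  segment ℝ M₀ M₁ ∩ K = {(1 / 2 : ℝ) • (M₀ + M₁)}

/-- `S` is the generating function of the outer billiard of `K` (with respect to the origin `0`):
`S φ₀ φ₁` is the area of the triangle `0 M₀ M₁`. -/
def IsGenFun (K : Set (ℝ × ℝ)) (S : ℝ → ℝ → ℝ) : Prop :=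
  ∀ φ₀ φ₁ : ℝ, φ₀ < φ₁ → φ₁ < φ₀ + π →
    ∃ M₀ M₁, SegData K φ₀ φ₁ M₀ M₁ ∧ S φ₀ φ₁ = |detV M₀ M₁| / 2

/-- The angular configuration `φ : ℤ → ℝ` is locally minimizing for the generating function `S`. -/
def LocMinConfig (S : ℝ → ℝ → ℝ) (φ : ℤ → ℝ) : Prop :=
  ∀ M N : ℤ, M ≤ N →
    IsLocalMin (fun x : ℤ → ℝ =>
      S (φ (M - 1)) (x M) + (∑ i ∈ Finset.Icc M (N - 1), S (x i) (x (i + 1))) +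
        S (x N) (φ (N + 1))) φ

/-- `φ` is a choice of polar angles for the sequence `A`, with consecutive angles within `(0, π)`
of each other. -/
def IsPolarLift (A : ℤ → ℝ × ℝ) (φ : ℤ → ℝ) : Prop :=
  (∀ n, ∃ ρ > (0 : ℝ), A n = ρ • uVec (φ n)) ∧ ∀ n, φ n < φ (n + 1) ∧ φ (n + 1) < φ n + π

/-- Every orbit of the outer billiard map `T` is locally minimizing with respect to the
generating function `S`. -/
def AllOrbitsLocMin (K : Set (ℝ × ℝ)) (T : ℝ × ℝ → ℝ × ℝ) (S : ℝ → ℝ → ℝ) : Prop :=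
  ∀ A : ℤ → ℝ × ℝ, (∀ n, A n ∉ K) → (∀ n, A (n + 1) = T (A n)) →
    ∀ φ : ℤ → ℝ, IsPolarLift A φ → LocMinConfig S φ

/-! ### One-dimensional Prékopa–Leindler inequality and sets in the positive quadrant -/

/-- The Brunn–Minkowski inequality for compact sets on the line: the translates `S + min T` and
`T + max S` lie in `2 U` and have only the point `max S + min T` in common. -/
theorem bm_compact {S T U : Set ℝ} (hS : IsCompact S) (hT : IsCompact T) (hS0 : S.Nonempty)
    (hT0 : T.Nonempty) (hU : ∀ x ∈ S, ∀ y ∈ T, (x + y) / 2 ∈ U) :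
    volume S + volume T ≤ 2 * volume U := by
  have ha := hS.sSup_mem hS0
  have hb := hT.sInf_mem hT0
  set a := sSup S with haa
  set b := sInf T with hbb
  have h2 : volume ((fun w : ℝ => w * (1 / 2)) ⁻¹' U) = 2 * volume U := by
    rw [Real.volume_preimage_mul_right (by norm_num)]
    norm_num
  have h3 : volume ((fun w : ℝ => w + -b) ⁻¹' S) = volume S := measure_preimage_add_right _ _ _
  have h4 : volume ((fun w : ℝ => w + -a) ⁻¹' T) = volume T := measure_preimage_add_right _ _ _
  rw [← h2, ← h3, ← h4, ← measure_union₀]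
  · refine measure_mono ?_
    rintro w (hw | hw)
    · have := hU _ hw b hb
      simpa [div_eq_mul_inv] using! this
    · have := hU a ha _ hw
      simpa [div_eq_mul_inv] using! this
  · exact ((measurable_add_const (-a)) hT.measurableSet).nullMeasurableSet
  · refine measure_mono_null (t := {a + b}) ?_ (by simp)
    rintro w ⟨hw1, hw2⟩
    have h5 : w + -b ≤ a := le_csSup hS.bddAbove hw1
    have h6 : b ≤ w + -a := csInf_le hT.bddBelow hw2
    have : w = a + b := by linarith
    simpa using this

/-- The Brunn–Minkowski inequality on the line, by inner regularity from the compact case. -/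
theorem bm_line {S T U : Set ℝ} (hS : MeasurableSet S) (hT : MeasurableSet T) (hS0 : S.Nonempty)
    (hT0 : T.Nonempty) (hU : ∀ x ∈ S, ∀ y ∈ T, (x + y) / 2 ∈ U) :
    volume S + volume T ≤ 2 * volume U := by
  obtain ⟨s, hs⟩ := hS0
  obtain ⟨t, ht⟩ := hT0
  rw [hS.measure_eq_iSup_isCompact, hT.measure_eq_iSup_isCompact]
  simp only [iSup_and']
  refine ENNReal.biSup_add_biSup_le' ⟨∅, by simp⟩ ⟨∅, by simp⟩ ?_
  rintro A ⟨hAS, hA⟩ B ⟨hBT, hB⟩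
  calc volume A + volume B ≤ volume (insert s A) + volume (insert t B) :=
        add_le_add (measure_mono (subset_insert _ _)) (measure_mono (subset_insert _ _))
    _ ≤ _ := by
      refine bm_compact (hA.insert s) (hB.insert t) (insert_nonempty _ _) (insert_nonempty _ _) ?_
      intro x hx y hy
      exact hU x (insert_subset hs hAS hx) y (insert_subset ht hBT hy)

theorem ennreal_amgm {a b c : ENNReal} (h : a + b ≤ 2 * c) : a * b ≤ c ^ 2 := by
  by_cases hc : c = ⊤
  · simp [hc]
  have h2c : 2 * c ≠ ⊤ := ENNReal.mul_ne_top (by simp) hc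
  have ha : a ≠ ⊤ := ne_top_of_le_ne_top h2c (le_trans le_self_add h)
  have hb : b ≠ ⊤ := ne_top_of_le_ne_top h2c (le_trans le_add_self h)
  lift a to NNReal using ha
  lift b to NNReal using hb
  lift c to NNReal using hc
  norm_cast at h ⊢
  have h' : (a : ℝ) + b ≤ 2 * c := by exact_mod_cast h
  have : (a : ℝ) * b ≤ (c : ℝ) ^ 2 := by
    nlinarith [sq_nonneg ((a : ℝ) - b), a.2, b.2, c.2, add_nonneg a.2 b.2]
  exact_mod_cast this

/-- The Prékopa–Leindler inequality on the line, for exponent `1/2` and bounded functions.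
After division by their suprema, `f` and `g` have nonempty superlevel sets at every level `t < 1`
and empty ones at every `t ≥ 1`, so `bm_line` compares the levels one at a time. -/
theorem prekopa {f g ρ : ℝ → ℝ} (hf : Measurable f) (hg : Measurable g) (hρ : Measurable ρ)
    (hf0 : ∀ x, 0 ≤ f x) (hg0 : ∀ x, 0 ≤ g x) (hρ0 : ∀ x, 0 ≤ ρ x)
    (hfb : BddAbove (range f)) (hgb : BddAbove (range g))
    (h : ∀ x y, f x * g y ≤ ρ ((x + y) / 2) ^ 2) :
    (∫⁻ x, ENNReal.ofReal (f x)) * (∫⁻ x, ENNReal.ofReal (g x)) ≤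
      (∫⁻ x, ENNReal.ofReal (ρ x)) ^ 2 := by
  set M := ⨆ x, f x with hM
  set N := ⨆ x, g x with hN
  have hfM : ∀ x, f x ≤ M := fun x => le_ciSup hfb x
  have hgN : ∀ x, g x ≤ N := fun x => le_ciSup hgb x
  rcases (le_trans (hf0 0) (hfM 0)).eq_or_lt with hM0 | hM0
  · have : ∀ x, f x = 0 := fun x => le_antisymm (hM0 ▸ hfM x) (hf0 x)
    simp [this]
  rcases (le_trans (hg0 0) (hgN 0)).eq_or_lt with hN0 | hN0
  · have : ∀ x, g x = 0 := fun x => le_antisymm (hN0 ▸ hgN x) (hg0 x)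
    simp [this]
  set R := √(M * N) with hR
  have hR0 : 0 < R := Real.sqrt_pos.2 (mul_pos hM0 hN0)
  have hR2 : R ^ 2 = M * N := Real.sq_sqrt (mul_pos hM0 hN0).le
  have scale : ∀ (k : ℝ → ℝ) (c : ℝ), Measurable k → 0 < c →
      ∫⁻ x, ENNReal.ofReal (k x) = ENNReal.ofReal c * ∫⁻ x, ENNReal.ofReal (k x / c) := by
    intro k c hk hc
    rw [← lintegral_const_mul _ (by fun_prop)]
    refine lintegral_congr fun x => ?_
    rw [← ENNReal.ofReal_mul hc.le]
    congr 1
    field_simp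
  have layer : ∀ (k : ℝ → ℝ) (c : ℝ), Measurable k → (∀ x, 0 ≤ k x) → 0 < c →
      ∫⁻ x, ENNReal.ofReal (k x / c) = ∫⁻ t in Ioi (0:ℝ), volume {x | t < k x / c} := by
    intro k c hk hk0 hc
    exact lintegral_eq_lintegral_meas_lt _ (Filter.Eventually.of_forall fun x => div_nonneg (hk0 x) hc.le)
      (hk.div_const c).aemeasurable
  have key : (∫⁻ x, ENNReal.ofReal (f x / M)) + (∫⁻ x, ENNReal.ofReal (g x / N)) ≤
      2 * ∫⁻ x, ENNReal.ofReal (ρ x / R) := by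
    rw [layer f M hf hf0 hM0, layer g N hg hg0 hN0, layer ρ R hρ hρ0 hR0]
    have mono : ∀ (k : ℝ → ℝ), Measurable fun t : ℝ => volume {x | t < k x} := by
      intro k
      refine Antitone.measurable fun s t hst => measure_mono ?_
      intro x hx
      exact lt_of_le_of_lt hst hx
    rw [← lintegral_add_left (mono fun x => f x / M), ← lintegral_const_mul _ (mono fun x => ρ x / R)]
    refine setLIntegral_mono_ae' measurableSet_Ioi (Filter.Eventually.of_forall fun t ht => ?_)
    have ht0 : 0 < t := ht
    rcases lt_or_ge t 1 with ht1 | ht1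
    · refine bm_line (measurableSet_lt measurable_const (hf.div_const M))
        (measurableSet_lt measurable_const (hg.div_const N)) ?_ ?_ ?_
      · obtain ⟨x, hx⟩ := exists_lt_of_lt_ciSup (show t * M < ⨆ x, f x by rw [← hM]; nlinarith)
        exact ⟨x, (lt_div_iff₀ hM0).2 hx⟩
      · obtain ⟨x, hx⟩ := exists_lt_of_lt_ciSup (show t * N < ⨆ x, g x by rw [← hN]; nlinarith)
        exact ⟨x, (lt_div_iff₀ hN0).2 hx⟩
      · intro x hx y hy
        have hx' : t * M < f x := (lt_div_iff₀ hM0).1 hx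
        have hy' : t * N < g y := (lt_div_iff₀ hN0).1 hy
        refine (lt_div_iff₀ hR0).2 ?_
        refine lt_of_pow_lt_pow_left₀ 2 (hρ0 _) ?_
        refine lt_of_lt_of_le ?_ (h x y)
        calc (t * R) ^ 2 = (t * M) * (t * N) := by rw [mul_pow, hR2]; ring
          _ < f x * g y := mul_lt_mul'' hx' hy' (by positivity) (by positivity)
    · have e1 : {x | t < f x / M} = ∅ := by
        refine eq_empty_of_forall_notMem fun x hx => ?_
        have hx' : t * M < f x := (lt_div_iff₀ hM0).1 hx
        nlinarith [hfM x]
      have e2 : {x | t < g x / N} = ∅ := by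
        refine eq_empty_of_forall_notMem fun x hx => ?_
        have hx' : t * N < g x := (lt_div_iff₀ hN0).1 hx
        nlinarith [hgN x]
      simp [e1, e2]
  have := ennreal_amgm key
  rw [scale f M hf hM0, scale g N hg hN0, scale ρ R hρ hR0, mul_pow, ← ENNReal.ofReal_pow hR0.le,
    hR2, ENNReal.ofReal_mul hM0.le]
  calc _ = ENNReal.ofReal M * ENNReal.ofReal N * ((∫⁻ x, ENNReal.ofReal (f x / M)) *
        (∫⁻ x, ENNReal.ofReal (g x / N))) := by ring
    _ ≤ _ := by gcongr

/-- If `x y ≤ c` for all `x ∈ S`, `y ∈ T`, then `S` and `T` lie in initial intervals of the positive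
half-line whose lengths have product at most `c`. -/
theorem slice_bound {S T : Set ℝ} {c : ℝ} (hS : ∀ x ∈ S, 0 < x) (hT : ∀ x ∈ T, 0 < x)
    (h : ∀ x ∈ S, ∀ y ∈ T, x * y ≤ c) : volume S * volume T ≤ ENNReal.ofReal c := by
  rcases T.eq_empty_or_nonempty with rfl | ⟨t, ht⟩
  · simp
  have hbd : ∀ y ∈ T, volume S ≤ ENNReal.ofReal (c / y) := by
    intro y hy
    calc volume S ≤ volume (Ioc 0 (c / y)) :=
          measure_mono fun x hx => ⟨hS x hx, (le_div_iff₀ (hT y hy)).2 (h x hx y hy)⟩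
      _ = _ := by simp
  by_cases h0 : volume S = 0
  · simp [h0]
  have hfin : volume S ≠ ⊤ := ne_top_of_le_ne_top ENNReal.ofReal_ne_top (hbd t ht)
  have hσ : 0 < (volume S).toReal := ENNReal.toReal_pos h0 hfin
  have hT' : volume T ≤ ENNReal.ofReal (c / (volume S).toReal) := by
    calc volume T ≤ volume (Ioc 0 (c / (volume S).toReal)) := by
          refine measure_mono fun y hy => ⟨hT y hy, (le_div_iff₀ hσ).2 ?_⟩
          have h1 := hbd y hy
          have hc : 0 ≤ c / y := by
            by_contra hneg
            rw [ENNReal.ofReal_of_nonpos (not_le.1 hneg).le] at h1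
            exact h0 (le_antisymm h1 bot_le)
          have h2 := ENNReal.toReal_le_of_le_ofReal hc h1
          rw [mul_comm]
          exact (le_div_iff₀ (hT y hy)).1 h2
      _ = _ := by simp
  calc volume S * volume T ≤ volume S * ENNReal.ofReal (c / (volume S).toReal) := by gcongr
    _ = ENNReal.ofReal ((volume S).toReal) * ENNReal.ofReal (c / (volume S).toReal) := by
        rw [ENNReal.ofReal_toReal hfin]
    _ = ENNReal.ofReal c := by
        rw [← ENNReal.ofReal_mul hσ.le]
        congr 1
        field_simp

theorem lintegral_Ioi_exp (F : ℝ → ENNReal) :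
    ∫⁻ s in Ioi (0:ℝ), F s = ∫⁻ x, ENNReal.ofReal (rexp x) * F (rexp x) := by
  have := lintegral_image_eq_lintegral_abs_deriv_mul (s := univ) MeasurableSet.univ
    (f := rexp) (f' := rexp) (fun x _ => (Real.hasDerivAt_exp x).hasDerivWithinAt)
    (Real.exp_injective.injOn) F
  rw [image_univ, Real.range_exp] at this
  simpa using this

/-- The area of the quarter disc, in the logarithmic variable `x = log s`. -/
theorem lintegral_quarter_disc :
    ∫⁻ x, ENNReal.ofReal (rexp x * √(1 - rexp x ^ 2)) ≤ ENNReal.ofReal (π / 4) := by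
  have h1 : ∫⁻ x, ENNReal.ofReal (rexp x * √(1 - rexp x ^ 2)) =
      ∫⁻ s in Ioi (0:ℝ), ENNReal.ofReal (√(1 - s ^ 2)) := by
    rw [lintegral_Ioi_exp]
    refine lintegral_congr fun x => ?_
    rw [ENNReal.ofReal_mul (Real.exp_pos x).le]
  have h2 : ∫⁻ s in Ioi (0:ℝ), ENNReal.ofReal (√(1 - s ^ 2)) ≤
      ∫⁻ s in Ioc (0:ℝ) 1, ENNReal.ofReal (√(1 - s ^ 2)) := by
    rw [← Ioc_union_Ioi_eq_Ioi (zero_le_one' ℝ)]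
    refine (lintegral_union_le _ _ _).trans ?_
    have : ∫⁻ s in Ioi (1:ℝ), ENNReal.ofReal (√(1 - s ^ 2)) = 0 := by
      rw [setLIntegral_congr_fun (g := fun _ => 0) measurableSet_Ioi]
      · simp
      · intro s hs
        have hs' : 1 < s := hs
        simp only
        rw [Real.sqrt_eq_zero_of_nonpos (by nlinarith)]
        simp
    rw [this, add_zero]
  have hc : Continuous fun s : ℝ => √(1 - s ^ 2) := by fun_prop
  have h3 : ∫⁻ s in Ioc (0:ℝ) 1, ENNReal.ofReal (√(1 - s ^ 2)) =
      ENNReal.ofReal (∫ s in (0:ℝ)..1, √(1 - s ^ 2)) := by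
    rw [intervalIntegral.integral_of_le zero_le_one, ofReal_integral_eq_lintegral_ofReal]
    · exact (hc.intervalIntegrable 0 1).1
    · exact Filter.Eventually.of_forall fun s => Real.sqrt_nonneg _
  have h4 : ∫ s in (0:ℝ)..1, √(1 - s ^ 2) = π / 4 := by
    have e1 := integral_sqrt_one_sub_sq
    rw [← intervalIntegral.integral_add_adjacent_intervals (b := 0)
      (hc.intervalIntegrable _ _) (hc.intervalIntegrable _ _)] at e1
    have e2 := intervalIntegral.integral_comp_neg (a := (0:ℝ)) (b := 1) fun s : ℝ => √(1 - s ^ 2)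
    simp only [neg_sq, neg_zero] at e2
    linarith
  rw [h1, ← h4, ← h3]
  exact h2

/-- The planar Blaschke–Santaló inequality for a pair of sets in the open positive quadrant:
the sections at abscissas `s` and `t` have lengths whose product is at most `1 - s t`, and the
logarithmic change of variables turns this bound into the hypothesis of `prekopa`. -/
theorem quadrant_bound {A B : Set (ℝ × ℝ)} (hA : MeasurableSet A) (hB : MeasurableSet B)
    (hA0 : ∀ a ∈ A, 0 < a.1 ∧ 0 < a.2) (hB0 : ∀ a ∈ B, 0 < a.1 ∧ 0 < a.2)
    (h : ∀ a ∈ A, ∀ b ∈ B, a.1 * b.1 + a.2 * b.2 ≤ 1) :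
    volume A * volume B ≤ ENNReal.ofReal ((π / 4) ^ 2) := by
  by_cases hvA : volume A = 0
  · simp [hvA]
  by_cases hvB : volume B = 0
  · simp [hvB]
  set F : ℝ → ENNReal := fun s => volume (Prod.mk s ⁻¹' A) with hF
  set G : ℝ → ENNReal := fun s => volume (Prod.mk s ⁻¹' B) with hG
  have hFm : Measurable F := measurable_measure_prodMk_left hA
  have hGm : Measurable G := measurable_measure_prodMk_left hB
  have hAF : volume A = ∫⁻ s, F s := by
    rw [Measure.volume_eq_prod, Measure.prod_apply hA]
  have hBG : volume B = ∫⁻ s, G s := by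
    rw [Measure.volume_eq_prod, Measure.prod_apply hB]
  have hFG : ∀ s t, F s * G t ≤ ENNReal.ofReal (1 - s * t) := fun s t =>
    slice_bound (fun x hx => (hA0 _ hx).2) (fun x hx => (hB0 _ hx).2)
      (fun x hx y hy => by have := h _ hx _ hy; simp only at this; linarith)
  have hFpos : ∀ s, F s ≠ 0 → 0 < s := by
    intro s hs
    obtain ⟨x, hx⟩ := nonempty_of_measure_ne_zero hs
    exact (hA0 _ hx).1
  have hGpos : ∀ s, G s ≠ 0 → 0 < s := by
    intro s hs
    obtain ⟨x, hx⟩ := nonempty_of_measure_ne_zero hs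
    exact (hB0 _ hx).1
  obtain ⟨s₀, hs₀⟩ : ∃ s, F s ≠ 0 := by
    by_contra! hn
    exact hvA (by rw [hAF]; simp [hn])
  obtain ⟨t₀, ht₀⟩ : ∃ s, G s ≠ 0 := by
    by_contra! hn
    exact hvB (by rw [hBG]; simp [hn])
  have hFfin : ∀ s, F s ≠ ⊤ := by
    intro s hs
    have := hFG s t₀
    rw [hs, ENNReal.top_mul ht₀] at this
    exact absurd (top_le_iff.1 this) ENNReal.ofReal_ne_top
  have hGfin : ∀ s, G s ≠ ⊤ := by
    intro s hs
    have := hFG s₀ s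
    rw [hs, ENNReal.mul_top hs₀] at this
    exact absurd (top_le_iff.1 this) ENNReal.ofReal_ne_top
  have hFGr : ∀ s t, (F s).toReal * (G t).toReal ≤ max (1 - s * t) 0 := by
    intro s t
    rw [← ENNReal.toReal_mul]
    refine (ENNReal.toReal_mono ENNReal.ofReal_ne_top (hFG s t)).trans ?_
    rw [ENNReal.toReal_ofReal']
  -- The logarithmic change of variables `s = exp x`.
  have red : ∀ H : ℝ → ENNReal, (∀ s, H s ≠ 0 → 0 < s) → (∀ s, H s ≠ ⊤) →
      ∫⁻ s, H s = ∫⁻ x, ENNReal.ofReal (rexp x * (H (rexp x)).toReal) := by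
    intro H hp hfin
    rw [← setLIntegral_eq_of_support_subset (s := Ioi 0) (fun s hs => hp s hs), lintegral_Ioi_exp]
    refine lintegral_congr fun x => ?_
    rw [ENNReal.ofReal_mul (Real.exp_pos x).le, ENNReal.ofReal_toReal (hfin _)]
  have small : ∀ u : ℝ, 0 < u → u * max (1 - u) 0 ≤ 1 := by
    intro u hu
    rcases le_total (1 - u) 0 with h0 | h0
    · rw [max_eq_right h0]; linarith
    · rw [max_eq_left h0]; nlinarith
  have hs₀' : 0 < s₀ * (F s₀).toReal := mul_pos (hFpos _ hs₀) (ENNReal.toReal_pos hs₀ (hFfin _))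
  have ht₀' : 0 < t₀ * (G t₀).toReal := mul_pos (hGpos _ ht₀) (ENNReal.toReal_pos ht₀ (hGfin _))
  have main := prekopa (f := fun x => rexp x * (F (rexp x)).toReal)
    (g := fun x => rexp x * (G (rexp x)).toReal) (ρ := fun x => rexp x * √(1 - rexp x ^ 2))
    (by fun_prop) (by fun_prop) (by fun_prop) (fun x => by positivity) (fun x => by positivity)
    (fun x => by positivity) ?_ ?_ ?_
  · rw [hAF, hBG, red F hFpos hFfin, red G hGpos hGfin]
    refine main.trans ?_
    rw [ENNReal.ofReal_pow (by positivity)]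
    gcongr
    exact lintegral_quarter_disc
  -- A single section of `B` of positive length bounds `s F(s)`, because `u (1 - u) ≤ 1`.
  · refine ⟨1 / (t₀ * (G t₀).toReal), ?_⟩
    rintro _ ⟨x, rfl⟩
    rw [le_div_iff₀ ht₀']
    have e := small (rexp x * t₀) (mul_pos (Real.exp_pos x) (hGpos _ ht₀))
    have e2 := mul_le_mul_of_nonneg_left (hFGr (rexp x) t₀)
      (mul_pos (Real.exp_pos x) (hGpos _ ht₀)).le
    simp only
    linarith
  · refine ⟨1 / (s₀ * (F s₀).toReal), ?_⟩
    rintro _ ⟨x, rfl⟩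
    rw [le_div_iff₀ hs₀']
    have e := small (s₀ * rexp x) (mul_pos (hFpos _ hs₀) (Real.exp_pos x))
    have e2 := mul_le_mul_of_nonneg_left (hFGr s₀ (rexp x))
      (mul_pos (hFpos _ hs₀) (Real.exp_pos x)).le
    simp only
    linarith
  · intro x y
    have e1 : rexp ((x + y) / 2) ^ 2 = rexp x * rexp y := by
      rw [sq, ← Real.exp_add, ← Real.exp_add]
      congr 1
      ring
    rw [mul_pow, e1, Real.sq_sqrt']
    have e2 := mul_le_mul_of_nonneg_left (hFGr (rexp x) (rexp y))
      (mul_pos (Real.exp_pos x) (Real.exp_pos y)).le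
    linarith

/-! ### Medians and quartering of planar sets by two lines -/

/-- The median of the function `X` on the set `S`, with respect to area: the least `c` such that
`X ≤ c` on at least half of `S`. -/
def med (S : Set (ℝ × ℝ)) (X : ℝ × ℝ → ℝ) : ℝ :=
  sInf {c | volume S ≤ 2 * volume (S ∩ {p | X p ≤ c})}

section med
variable {S : Set (ℝ × ℝ)} {X : ℝ × ℝ → ℝ} {R : ℝ}

theorem le_of_mem_med (h0 : volume S ≠ 0) (hR : ∀ p ∈ S, -R ≤ X p) {c : ℝ}
    (hc : volume S ≤ 2 * volume (S ∩ {p | X p ≤ c})) : -R ≤ c := by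
  by_contra! hlt
  have : S ∩ {p | X p ≤ c} = ∅ := by
    refine eq_empty_of_forall_notMem fun p hp => ?_
    have h1 := hR p hp.1
    have h2 : X p ≤ c := hp.2
    linarith
  rw [this] at hc
  exact h0 (by simpa using hc)

theorem mem_med (hR : ∀ p ∈ S, X p ≤ R) : volume S ≤ 2 * volume (S ∩ {p | X p ≤ R}) := by
  have : S ∩ {p | X p ≤ R} = S := inter_eq_left.2 fun p hp => hR p hp
  rw [this, two_mul]
  exact le_self_add

theorem neg_le_med (h0 : volume S ≠ 0) (hR : ∀ p ∈ S, -R ≤ X p) {R' : ℝ}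
    (hR' : ∀ p ∈ S, X p ≤ R') : -R ≤ med S X :=
  le_csInf ⟨R', mem_med hR'⟩ fun _ hc => le_of_mem_med h0 hR hc

theorem med_le (h0 : volume S ≠ 0) (hR : ∀ p ∈ S, -R ≤ X p) {c : ℝ}
    (hc : volume S ≤ 2 * volume (S ∩ {p | X p ≤ c})) : med S X ≤ c :=
  csInf_le ⟨-R, fun _ h => le_of_mem_med h0 hR h⟩ hc

theorem med_le_add {X' : ℝ × ℝ → ℝ} {R' ε : ℝ} (h0 : volume S ≠ 0) (hR : ∀ p ∈ S, -R ≤ X p)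
    (hR' : ∀ p ∈ S, X' p ≤ R') (h : ∀ p ∈ S, X p ≤ X' p + ε) : med S X ≤ med S X' + ε := by
  rw [← sub_le_iff_le_add]
  refine le_csInf ⟨R', mem_med hR'⟩ fun c hc => ?_
  rw [sub_le_iff_le_add]
  refine med_le h0 hR (le_trans hc ?_)
  gcongr 2 * volume ?_
  rintro p ⟨hp, hpc⟩
  refine ⟨hp, ?_⟩
  have h1 : X' p ≤ c := hpc
  have h2 := h p hp
  show X p ≤ c + ε
  linarith

/-- The infimum in the definition of the median is attained: `X ≤ med S X` on half of `S`. -/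
theorem half_le_med (hS : MeasurableSet S) (hfin : volume S ≠ ⊤)
    (hX : Measurable X) (hR' : ∀ p ∈ S, X p ≤ R) :
    volume S ≤ 2 * volume (S ∩ {p | X p ≤ med S X}) := by
  have h1 : S ∩ {p | X p ≤ med S X} = ⋂ n : ℕ, S ∩ {p | X p ≤ med S X + 1 / ((n : ℝ) + 1)} := by
    ext p
    simp only [mem_inter_iff, mem_iInter, mem_ofPred_eq]
    constructor
    · rintro ⟨hp, hx⟩ n
      exact ⟨hp, hx.trans (by linarith [Nat.one_div_pos_of_nat (α := ℝ) (n := n)])⟩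
    · intro hn
      refine ⟨(hn 0).1, ?_⟩
      refine le_of_forall_pos_lt_add fun ε hε => ?_
      obtain ⟨n, hn'⟩ := exists_nat_one_div_lt hε
      linarith [(hn n).2]
  have hanti : Antitone fun n : ℕ => S ∩ {p | X p ≤ med S X + 1 / ((n : ℝ) + 1)} := by
    intro m n hmn p hp
    refine ⟨hp.1, le_trans (show X p ≤ _ from hp.2) ?_⟩
    have := Nat.one_div_le_one_div (α := ℝ) hmn
    linarith
  have hlim := tendsto_measure_iInter_atTop (μ := volume)
    (fun n => (hS.inter (measurableSet_le hX measurable_const)).nullMeasurableSet) hanti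
    ⟨0, ne_top_of_le_ne_top hfin (measure_mono inter_subset_left)⟩
  rw [← h1] at hlim
  refine ge_of_tendsto' (ENNReal.Tendsto.const_mul hlim (Or.inr (by simp))) fun n => ?_
  obtain ⟨c, hc, hlt⟩ := exists_lt_of_csInf_lt ⟨R, mem_med hR'⟩
    (show med S X < med S X + 1 / ((n : ℝ) + 1) by
      linarith [Nat.one_div_pos_of_nat (α := ℝ) (n := n)])
  refine le_trans (show _ ≤ _ from hc) ?_
  refine mul_le_mul_right (measure_mono ?_) 2
  rintro p ⟨hp, hpc⟩
  exact ⟨hp, le_trans (show X p ≤ c from hpc) hlt.le⟩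

theorem med_le_half (h0 : volume S ≠ 0) (hR : ∀ p ∈ S, -R ≤ X p) :
    2 * volume (S ∩ {p | X p < med S X}) ≤ volume S := by
  have h1 : S ∩ {p | X p < med S X} = ⋃ n : ℕ, S ∩ {p | X p ≤ med S X - 1 / ((n : ℝ) + 1)} := by
    ext p
    simp only [mem_inter_iff, mem_iUnion, mem_ofPred_eq]
    constructor
    · rintro ⟨hp, hx⟩
      obtain ⟨n, hn'⟩ := exists_nat_one_div_lt (sub_pos.2 hx)
      exact ⟨n, hp, by linarith⟩
    · rintro ⟨n, hp, hx⟩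
      exact ⟨hp, lt_of_le_of_lt hx (by linarith [Nat.one_div_pos_of_nat (α := ℝ) (n := n)])⟩
  have hmono : Monotone fun n : ℕ => S ∩ {p | X p ≤ med S X - 1 / ((n : ℝ) + 1)} := by
    intro m n hmn p hp
    refine ⟨hp.1, le_trans (show X p ≤ _ from hp.2) ?_⟩
    have := Nat.one_div_le_one_div (α := ℝ) hmn
    linarith
  rw [h1, hmono.measure_iUnion, ENNReal.mul_iSup]
  refine iSup_le fun n => ?_
  by_contra! hlt
  have := med_le h0 hR hlt.le
  linarith [Nat.one_div_pos_of_nat (α := ℝ) (n := n)]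

theorem half_le_of_half {A B : Set (ℝ × ℝ)} (hfin : volume S ≠ ⊤) (hAB : S ⊆ A ∪ B)
    (hA : 2 * volume A ≤ volume S) : volume S ≤ 2 * volume B := by
  have h1 : volume S ≤ volume A + volume B := (measure_mono hAB).trans (measure_union_le _ _)
  have hAf : 2 * volume A ≠ ⊤ := ne_top_of_le_ne_top hfin hA
  refine (ENNReal.add_le_add_iff_left (a := 2 * volume A) hAf).1 ?_
  calc 2 * volume A + volume S ≤ volume S + volume S := by gcongr
    _ = 2 * volume S := (two_mul _).symm
    _ ≤ 2 * (volume A + volume B) := by gcongr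
    _ = _ := by ring

/-- If the level sets of `X` are null, each side of the median contains half of `S`. -/
theorem med_split (hS : MeasurableSet S) (h0 : volume S ≠ 0) (hfin : volume S ≠ ⊤)
    (hX : Measurable X) (hR : ∀ p ∈ S, |X p| ≤ R)
    (hnull : ∀ c, volume {p | X p = c} = 0) :
    volume S ≤ 2 * volume (S ∩ {p | X p < med S X}) ∧
      volume S ≤ 2 * volume (S ∩ {p | med S X < X p}) := by
  have h1 := half_le_med hS hfin hX fun p hp => (abs_le.1 (hR p hp)).2
  have h2 := med_le_half h0 fun p hp => (abs_le.1 (hR p hp)).1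
  refine ⟨h1.trans ?_, half_le_of_half hfin (A := S ∩ {p | X p < med S X} ∪ {p | X p = med S X})
    ?_ ?_⟩
  · gcongr 2 * ?_
    calc volume (S ∩ {p | X p ≤ med S X}) ≤
          volume (S ∩ {p | X p < med S X} ∪ {p | X p = med S X}) := by
          refine measure_mono ?_
          rintro p ⟨hp, hpx⟩
          rcases (show X p ≤ med S X from hpx).lt_or_eq with h | h
          · exact Or.inl ⟨hp, h⟩
          · exact Or.inr h
      _ ≤ _ := (measure_union_le _ _).trans (by rw [hnull, add_zero])
  · intro p hp
    rcases lt_trichotomy (X p) (med S X) with h | h | h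
    · exact Or.inl (Or.inl ⟨hp, h⟩)
    · exact Or.inl (Or.inr h)
    · exact Or.inr ⟨hp, h⟩
  · refine le_trans ?_ h2
    gcongr 2 * ?_
    exact (measure_union_le _ _).trans (by rw [hnull, add_zero])

/-- Subtracting `v Y`, with `Y` positive, lowers the median of a bounded function at least at a
linear rate in `v`, whereas adding `v Y` keeps it above the lower bound `-R`. -/
theorem med_drift {x Y : ℝ × ℝ → ℝ} (hS : MeasurableSet S) (h0 : volume S ≠ 0)
    (hfin : volume S ≠ ⊤) (hY : Measurable Y) (hxR : ∀ p ∈ S, |x p| ≤ R)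
    (hY0 : ∀ p ∈ S, 0 < Y p) (hYR : ∀ p ∈ S, Y p ≤ R) :
    ∃ δ > 0, ∀ v ≥ 0, med S (fun p => x p - v * Y p) ≤ R - v * δ ∧
      -R ≤ med S (fun p => x p + v * Y p) := by
  have h1 := half_le_med hS hfin hY hYR
  have h2 := med_le_half (X := Y) (R := 0) h0 (by simpa using fun p hp => (hY0 p hp).le)
  have hm : 0 < med S Y := by
    by_contra! hle
    have : S ∩ {p | Y p ≤ med S Y} = ∅ := by
      refine eq_empty_of_forall_notMem fun p hp => ?_
      have := hY0 p hp.1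
      have h3 : Y p ≤ med S Y := hp.2
      linarith
    rw [this] at h1
    exact h0 (by simpa using h1)
  have h3 : volume S ≤ 2 * volume (S ∩ {p | med S Y ≤ Y p}) := by
    refine half_le_of_half hfin (fun p hp => ?_) h2
    rcases lt_or_ge (Y p) (med S Y) with h | h
    · exact Or.inl ⟨hp, h⟩
    · exact Or.inr ⟨hp, h⟩
  refine ⟨med S Y, hm, fun v hv => ⟨?_, ?_⟩⟩
  · refine med_le (R := R + v * R) h0 (fun p hp => ?_) (h3.trans ?_)
    · have e1 := (abs_le.1 (hxR p hp)).1
      have e2 := mul_le_mul_of_nonneg_left (hYR p hp) hv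
      linarith
    · gcongr 2 * volume ?_
      rintro p ⟨hp, hpY⟩
      refine ⟨hp, ?_⟩
      have e1 := (abs_le.1 (hxR p hp)).2
      have e2 := mul_le_mul_of_nonneg_left (show med S Y ≤ Y p from hpY) hv
      show x p - v * Y p ≤ R - v * med S Y
      linarith
  · refine neg_le_med (R' := R + v * R) h0 (fun p hp => ?_) (fun p hp => ?_)
    · have e1 := (abs_le.1 (hxR p hp)).1
      have e2 := mul_nonneg hv (hY0 p hp).le
      linarith
    · have e1 := (abs_le.1 (hxR p hp)).2
      have e2 := mul_le_mul_of_nonneg_left (hYR p hp) hv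
      linarith

/-- The median is 1-Lipschitz for the supremum norm, hence continuous in the parameter `v`. -/
theorem med_continuous {x Y : ℝ × ℝ → ℝ} (h0 : volume S ≠ 0) (hxR : ∀ p ∈ S, |x p| ≤ R)
    (hYR : ∀ p ∈ S, |Y p| ≤ R) : Continuous fun v : ℝ => med S (fun p => x p - v * Y p) := by
  have hR0 : 0 ≤ R := by
    obtain ⟨p, hp⟩ := nonempty_of_measure_ne_zero h0
    exact (abs_nonneg _).trans (hYR p hp)
  have bd : ∀ v : ℝ, ∀ p ∈ S, |x p - v * Y p| ≤ R + |v| * R := by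
    intro v p hp
    refine (abs_sub _ _).trans ?_
    rw [abs_mul]
    exact add_le_add (hxR p hp) (mul_le_mul_of_nonneg_left (hYR p hp) (abs_nonneg v))
  have one : ∀ v w : ℝ, med S (fun p => x p - v * Y p) ≤
      med S (fun p => x p - w * Y p) + R * |v - w| := by
    intro v w
    refine med_le_add (R := R + |v| * R) (R' := R + |w| * R) h0
      (fun p hp => (abs_le.1 (bd v p hp)).1) (fun p hp => (abs_le.1 (bd w p hp)).2) fun p hp => ?_
    have e1 : (w - v) * Y p ≤ |v - w| * R := by
      refine (le_abs_self _).trans ?_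
      rw [abs_mul, abs_sub_comm]
      exact mul_le_mul_of_nonneg_left (hYR p hp) (abs_nonneg _)
    linarith
  refine (LipschitzWith.of_dist_le_mul (K := ⟨R, hR0⟩) fun v w => ?_).continuous
  rw [Real.dist_eq, Real.dist_eq]
  change |_| ≤ R * |v - w|
  rw [abs_le]
  have e1 := one v w
  have e2 := one w v
  rw [abs_sub_comm w v] at e2
  constructor <;> linarith

end med

theorem line_null (v d c : ℝ) : volume {p : ℝ × ℝ | p.2 - v * (p.1 - d) = c} = 0 := by
  have hm : MeasurableSet {p : ℝ × ℝ | p.2 - v * (p.1 - d) = c} :=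
    measurableSet_eq_fun (by fun_prop) (by fun_prop)
  rw [Measure.volume_eq_prod, Measure.measure_prod_null hm]
  refine Filter.Eventually.of_forall fun s => ?_
  refine measure_mono_null (t := {c + v * (s - d)}) ?_ (by simp)
  intro y hy
  have hy' : y - v * (s - d) = c := hy
  show y = _
  linarith

theorem vline_null (c : ℝ) : volume {p : ℝ × ℝ | p.1 = c} = 0 := by
  have : {p : ℝ × ℝ | p.1 = c} = {c} ×ˢ univ := by ext p; simp
  rw [this, Measure.volume_eq_prod, Measure.prod_prod]
  simp

/-- Two lines, `x = d` and `y = c + v (x - d)`, that cut a bounded planar set of positive area into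
four parts, each of at least a quarter of the area. -/
theorem exists_quartering {K : Set (ℝ × ℝ)} (hK : MeasurableSet K) (h0 : volume K ≠ 0)
    (hb : Bornology.IsBounded K) :
    ∃ d c v : ℝ, ∀ σ τ : ℝ, (σ = 1 ∨ σ = -1) → (τ = 1 ∨ τ = -1) →
      volume K ≤ 4 * volume (K ∩ {p | 0 < σ * (p.1 - d) ∧ 0 < τ * (p.2 - c - v * (p.1 - d))}) := by
  obtain ⟨R₀, hR₀⟩ := hb.exists_norm_le
  have hfin : volume K ≠ ⊤ := hb.measure_lt_top.ne
  have h1 : ∀ p ∈ K, |p.1| ≤ R₀ := fun p hp => (norm_fst_le p).trans (hR₀ p hp)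
  have h2 : ∀ p ∈ K, |p.2| ≤ R₀ := fun p hp => (norm_snd_le p).trans (hR₀ p hp)
  set d := med K (fun p => p.1) with hd
  have hsp := med_split hK h0 hfin (X := fun p => p.1) measurable_fst h1 vline_null
  rw [← hd] at hsp
  set Sm := K ∩ {p : ℝ × ℝ | p.1 < d} with hSm
  set Sp := K ∩ {p : ℝ × ℝ | d < p.1} with hSp
  have hSmm : MeasurableSet Sm := hK.inter (measurableSet_lt measurable_fst measurable_const)
  have hSpm : MeasurableSet Sp := hK.inter (measurableSet_lt measurable_const measurable_fst)
  have hm0 : volume Sm ≠ 0 := fun h => h0 (by simpa [h] using hsp.1)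
  have hp0 : volume Sp ≠ 0 := fun h => h0 (by simpa [h] using hsp.2)
  have hmf : volume Sm ≠ ⊤ := ne_top_of_le_ne_top hfin (measure_mono inter_subset_left)
  have hpf : volume Sp ≠ ⊤ := ne_top_of_le_ne_top hfin (measure_mono inter_subset_left)
  set R := R₀ + |d| with hR
  have hx : ∀ p ∈ K, |p.2| ≤ R := fun p hp => (h2 p hp).trans (by simp [hR])
  have hY : ∀ p ∈ K, |p.1 - d| ≤ R := fun p hp =>
    (abs_sub _ _).trans (add_le_add (h1 p hp) le_rfl)
  have hR0 : 0 ≤ R := by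
    obtain ⟨p, hp⟩ := nonempty_of_measure_ne_zero h0
    exact (abs_nonneg _).trans (hx p hp)
  obtain ⟨δ, hδ, hdp⟩ := med_drift (x := fun p => p.2) (Y := fun p => p.1 - d) (R := R) hSpm hp0 hpf
    (by fun_prop) (fun p hp => hx p hp.1) (fun p hp => sub_pos.2 hp.2)
    (fun p hp => (abs_le.1 (hY p hp.1)).2)
  obtain ⟨δ', hδ', hdm⟩ := med_drift (x := fun p => p.2) (Y := fun p => d - p.1) (R := R) hSmm hm0
    hmf (by fun_prop) (fun p hp => hx p hp.1) (fun p hp => sub_pos.2 hp.2)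
    (fun p hp => by have := (abs_le.1 (hY p hp.1)).1; linarith)
  have hcp := med_continuous (x := fun p => p.2) (Y := fun p => p.1 - d) (R := R) hp0
    (fun p hp => hx p hp.1) (fun p hp => hY p hp.1)
  have hcm := med_continuous (x := fun p => p.2) (Y := fun p => p.1 - d) (R := R) hm0
    (fun p hp => hx p hp.1) (fun p hp => hY p hp.1)
  -- Among the lines of slope `v`, one halves the right part of `K` and one the left part. They meet
  -- the line `x = d` at heights that depend continuously on `v`, and the difference of these
  -- heights changes sign.
  obtain ⟨v, hv⟩ : ∃ v : ℝ, med Sp (fun p => p.2 - v * (p.1 - d)) -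
      med Sm (fun p => p.2 - v * (p.1 - d)) = 0 := by
    refine mem_range_of_exists_le_of_exists_ge (hcp.sub hcm) ⟨2 * R / δ, ?_⟩ ⟨-(2 * R / δ'), ?_⟩
    · have e := hdp (2 * R / δ) (by positivity)
      have e' := hdm (2 * R / δ) (by positivity)
      have e1 : (fun p : ℝ × ℝ => p.2 - 2 * R / δ * (p.1 - d)) =
        fun p => p.2 + 2 * R / δ * (d - p.1) := by funext p; ring
      have e2 : 2 * R / δ * δ = 2 * R := by field_simp
      have a1 := e.1
      have a2 := e'.2
      rw [← e1] at a2
      rw [e2] at a1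
      linarith
    · have e := hdp (2 * R / δ') (by positivity)
      have e' := hdm (2 * R / δ') (by positivity)
      have e1 : (fun p : ℝ × ℝ => p.2 - -(2 * R / δ') * (p.1 - d)) =
        fun p => p.2 - 2 * R / δ' * (d - p.1) := by funext p; ring
      have e3 : (fun p : ℝ × ℝ => p.2 - -(2 * R / δ') * (p.1 - d)) =
        fun p => p.2 + 2 * R / δ' * (p.1 - d) := by funext p; ring
      have e2 : 2 * R / δ' * δ' = 2 * R := by field_simp
      have a1 := e.2
      have a2 := e'.1
      rw [← e1] at a2
      rw [← e3] at a1
      rw [e2] at a2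
      linarith
  set c := med Sp (fun p => p.2 - v * (p.1 - d)) with hc
  have hcm' : med Sm (fun p => p.2 - v * (p.1 - d)) = c := by linarith
  have hbd : ∀ p ∈ K, |p.2 - v * (p.1 - d)| ≤ R + |v| * R := by
    intro p hp
    refine (abs_sub _ _).trans ?_
    rw [abs_mul]
    exact add_le_add (hx p hp) (mul_le_mul_of_nonneg_left (hY p hp) (abs_nonneg v))
  have sp := med_split hSpm hp0 hpf (X := fun p => p.2 - v * (p.1 - d)) (by fun_prop)
    (fun p hp => hbd p hp.1) (line_null v d)
  have sm := med_split hSmm hm0 hmf (X := fun p => p.2 - v * (p.1 - d)) (by fun_prop)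
    (fun p hp => hbd p hp.1) (line_null v d)
  rw [← hc] at sp
  rw [hcm'] at sm
  have fin : ∀ {S A B : Set (ℝ × ℝ)}, volume K ≤ 2 * volume S → volume S ≤ 2 * volume A → A ⊆ B →
      volume K ≤ 4 * volume B := by
    intro S A B a1 a2 a3
    calc volume K ≤ 2 * volume S := a1
      _ ≤ 2 * (2 * volume A) := by gcongr
      _ = 4 * volume A := by rw [← mul_assoc]; norm_num
      _ ≤ _ := by gcongr
  refine ⟨d, c, v, ?_⟩
  rintro σ τ (rfl | rfl) (rfl | rfl)
  · refine fin hsp.2 sp.2 ?_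
    rintro p ⟨⟨hp, ha⟩, hb⟩
    simp only [mem_ofPred_eq] at ha hb
    exact ⟨hp, by linarith, by linarith⟩
  · refine fin hsp.2 sp.1 ?_
    rintro p ⟨⟨hp, ha⟩, hb⟩
    simp only [mem_ofPred_eq] at ha hb
    exact ⟨hp, by linarith, by linarith⟩
  · refine fin hsp.1 sm.2 ?_
    rintro p ⟨⟨hp, ha⟩, hb⟩
    simp only [mem_ofPred_eq] at ha hb
    exact ⟨hp, by linarith, by linarith⟩
  · refine fin hsp.1 sm.1 ?_
    rintro p ⟨⟨hp, ha⟩, hb⟩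
    simp only [mem_ofPred_eq] at ha hb
    exact ⟨hp, by linarith, by linarith⟩

/-! ### The planar Blaschke–Santaló inequality -/

/-- The linear map with matrix `(a, b; c, d)` divides preimages by `|a d - b c|` in area. -/
theorem volume_preimage_matrix {a b c d : ℝ} (h : a * d - b * c ≠ 0) (S : Set (ℝ × ℝ)) :
    volume ((fun p : ℝ × ℝ => (a * p.1 + b * p.2, c * p.1 + d * p.2)) ⁻¹' S) =
      ENNReal.ofReal |(a * d - b * c)⁻¹| * volume S := by
  set f : (ℝ × ℝ) →ₗ[ℝ] ℝ × ℝ :=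
    Matrix.toLin (Module.Basis.finTwoProd ℝ) (Module.Basis.finTwoProd ℝ) !![a, b; c, d] with hf
  have hdet : LinearMap.det f = a * d - b * c := by
    rw [hf, LinearMap.det_toLin, Matrix.det_fin_two_of]
  have hfun : (fun p : ℝ × ℝ => (a * p.1 + b * p.2, c * p.1 + d * p.2)) = f := by
    funext p
    rw [hf, Matrix.toLin_finTwoProd_apply]
  rw [hfun, Measure.addHaar_preimage_linearMap _ (by rwa [hdet]), hdet]

theorem volume_preimage_matrix_one {a b c d : ℝ} (h : |a * d - b * c| = 1) (S : Set (ℝ × ℝ)) :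
    volume ((fun p : ℝ × ℝ => (a * p.1 + b * p.2, c * p.1 + d * p.2)) ⁻¹' S) = volume S := by
  rw [volume_preimage_matrix (by intro h0; rw [h0] at h; simp at h), abs_inv, h]
  simp

theorem isClosed_polarDual (C : Set (ℝ × ℝ)) (x : ℝ × ℝ) : IsClosed (polarDual C x) := by
  have : polarDual C x = ⋂ c ∈ C, {y : ℝ × ℝ | y.1 * (c.1 - x.1) + y.2 * (c.2 - x.2) ≤ 1} := by
    ext y; simp [polarDual]
  rw [this]
  exact isClosed_biInter fun c _ => isClosed_le (by fun_prop) (by fun_prop)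

/-- The bound of `quadrant_bound` for one of the four sectors of `K` cut out by two lines crossing
at `(d, c)`. An area-preserving linear map takes the sector to the positive quadrant, and its inverse
transpose does the same with the dual sector of `P`. -/
theorem sector_bound {K P : Set (ℝ × ℝ)} (hK : MeasurableSet K) (hP : MeasurableSet P)
    {d c v σ τ : ℝ} (h : ∀ k ∈ K, ∀ y ∈ P, y.1 * (k.1 - d) + y.2 * (k.2 - c) ≤ 1)
    (hσ : σ = 1 ∨ σ = -1) (hτ : τ = 1 ∨ τ = -1) :
    volume (K ∩ {p | 0 < σ * (p.1 - d) ∧ 0 < τ * (p.2 - c - v * (p.1 - d))}) *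
      volume (P ∩ {p | 0 < σ * (p.1 + v * p.2) ∧ 0 < τ * p.2}) ≤
      ENNReal.ofReal ((π / 4) ^ 2) := by
  have hσ2 : σ * σ = 1 := by rcases hσ with rfl | rfl <;> norm_num
  have hτ2 : τ * τ = 1 := by rcases hτ with rfl | rfl <;> norm_num
  have hστ : |σ * τ| = 1 := by
    rcases hσ with rfl | rfl <;> rcases hτ with rfl | rfl <;> norm_num
  set A := K ∩ {p : ℝ × ℝ | 0 < σ * (p.1 - d) ∧ 0 < τ * (p.2 - c - v * (p.1 - d))} with hA
  set B := P ∩ {p : ℝ × ℝ | 0 < σ * (p.1 + v * p.2) ∧ 0 < τ * p.2} with hB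
  have hAm : MeasurableSet A := hK.inter (IsOpen.measurableSet (
    IsOpen.and (isOpen_lt (f := fun _ : ℝ × ℝ => (0:ℝ)) (by fun_prop) (by fun_prop))
      (isOpen_lt (f := fun _ : ℝ × ℝ => (0:ℝ)) (by fun_prop) (by fun_prop))))
  have hBm : MeasurableSet B := hP.inter (IsOpen.measurableSet (
    IsOpen.and (isOpen_lt (f := fun _ : ℝ × ℝ => (0:ℝ)) (by fun_prop) (by fun_prop))
      (isOpen_lt (f := fun _ : ℝ × ℝ => (0:ℝ)) (by fun_prop) (by fun_prop))))
  have e1 : volume A = volume ((fun p : ℝ × ℝ => (σ * p.1 + 0 * p.2, v * σ * p.1 + τ * p.2)) ⁻¹'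
      ((fun p : ℝ × ℝ => p + (d, c)) ⁻¹' A)) := by
    rw [volume_preimage_matrix_one (by simpa using hστ), measure_preimage_add_right]
  have e2 : volume B =
      volume ((fun p : ℝ × ℝ => (σ * p.1 + (-(v * τ)) * p.2, 0 * p.1 + τ * p.2)) ⁻¹' B) := by
    rw [volume_preimage_matrix_one (by simpa using hστ)]
  rw [e1, e2]
  refine quadrant_bound ?_ ?_ ?_ ?_ ?_
  · exact (hAm.preimage (by fun_prop)).preimage (by fun_prop)
  · exact hBm.preimage (by fun_prop)
  · rintro a ⟨-, ha1, ha2⟩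
    simp only [Prod.fst_add, Prod.snd_add] at ha1 ha2
    constructor
    · calc (0:ℝ) < _ := ha1
        _ = σ * σ * a.1 := by ring
        _ = a.1 := by rw [hσ2, one_mul]
    · calc (0:ℝ) < _ := ha2
        _ = τ * τ * a.2 := by ring
        _ = a.2 := by rw [hτ2, one_mul]
  · rintro a ⟨-, ha1, ha2⟩
    simp only at ha1 ha2
    constructor
    · calc (0:ℝ) < _ := ha1
        _ = σ * σ * a.1 := by ring
        _ = a.1 := by rw [hσ2, one_mul]
    · calc (0:ℝ) < _ := ha2
        _ = τ * τ * a.2 := by ring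
        _ = a.2 := by rw [hτ2, one_mul]
  · rintro a ⟨ha, -⟩ b ⟨hb, -⟩
    have := h _ ha _ hb
    simp only [Prod.fst_add, Prod.snd_add] at this
    calc a.1 * b.1 + a.2 * b.2 = σ * σ * (a.1 * b.1) + τ * τ * (a.2 * b.2) := by
          rw [hσ2, hτ2, one_mul, one_mul]
      _ = _ := by ring
      _ ≤ 1 := this

/-- The crossing point of two lines that quarter the area of a convex body is interior to it: a
line supporting the body at that point would leave a whole sector outside. -/
theorem mem_interior_of_quartering {K : Set (ℝ × ℝ)} (hconv : Convex ℝ K)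
    (hint : (interior K).Nonempty) {d c v : ℝ}
    (h : ∀ σ τ : ℝ, (σ = 1 ∨ σ = -1) → (τ = 1 ∨ τ = -1) →
      (K ∩ {p | 0 < σ * (p.1 - d) ∧ 0 < τ * (p.2 - c - v * (p.1 - d))}).Nonempty) :
    (d, c) ∈ interior K := by
  by_contra hz
  obtain ⟨f, hf⟩ := geometric_hahn_banach_open_point hconv.interior isOpen_interior hz
  have hlin : ∀ p : ℝ × ℝ, f p = p.1 * f (1, 0) + p.2 * f (0, 1) := by
    intro p
    have : p = p.1 • ((1, 0) : ℝ × ℝ) + p.2 • ((0, 1) : ℝ × ℝ) := by ext <;> simp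
    conv_lhs => rw [this]
    rw [map_add, map_smul, map_smul, smul_eq_mul, smul_eq_mul]
  have hfK : ∀ k ∈ K, f k ≤ f (d, c) := by
    intro k hk
    have hk' : k ∈ closure (interior K) := by
      rw [hconv.closure_interior_eq_closure_of_nonempty_interior hint]
      exact subset_closure hk
    exact closure_minimal (fun a ha => (hf a ha).le) (isClosed_le f.continuous continuous_const) hk'
  obtain ⟨σ, hσ, hσf⟩ : ∃ σ : ℝ, (σ = 1 ∨ σ = -1) ∧
      f (1, 0) + v * f (0, 1) = σ * |f (1, 0) + v * f (0, 1)| := by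
    rcases le_total 0 (f (1, 0) + v * f (0, 1)) with h0 | h0
    · exact ⟨1, Or.inl rfl, by rw [abs_of_nonneg h0, one_mul]⟩
    · exact ⟨-1, Or.inr rfl, by rw [abs_of_nonpos h0]; ring⟩
  obtain ⟨τ, hτ, hτf⟩ : ∃ τ : ℝ, (τ = 1 ∨ τ = -1) ∧ f (0, 1) = τ * |f (0, 1)| := by
    rcases le_total 0 (f (0, 1)) with h0 | h0
    · exact ⟨1, Or.inl rfl, by rw [abs_of_nonneg h0, one_mul]⟩
    · exact ⟨-1, Or.inr rfl, by rw [abs_of_nonpos h0]; ring⟩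
  obtain ⟨k, hk, h1, h2⟩ := h σ τ hσ hτ
  have h3 := hfK k hk
  rw [hlin k, hlin (d, c)] at h3
  simp only at h3
  set m := f (1, 0) + v * f (0, 1)
  set n := f (0, 1)
  have h4 : |m| * (σ * (k.1 - d)) + |n| * (τ * (k.2 - c - v * (k.1 - d))) ≤ 0 := by
    calc |m| * (σ * (k.1 - d)) + |n| * (τ * (k.2 - c - v * (k.1 - d)))
        = (σ * |m|) * (k.1 - d) + (τ * |n|) * (k.2 - c - v * (k.1 - d)) := by ring
      _ = m * (k.1 - d) + n * (k.2 - c - v * (k.1 - d)) := by rw [← hσf, ← hτf]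
      _ ≤ 0 := by simp only [m]; linarith
  have h5 := mul_nonneg (abs_nonneg m) h1.le
  have h6 := mul_nonneg (abs_nonneg n) h2.le
  have hn : n = 0 := by
    have : |n| * (τ * (k.2 - c - v * (k.1 - d))) = 0 := by linarith
    rcases mul_eq_zero.1 this with h | h
    · exact abs_eq_zero.1 h
    · exact absurd h h2.ne'
  have hm : m = 0 := by
    have : |m| * (σ * (k.1 - d)) = 0 := by linarith
    rcases mul_eq_zero.1 this with h | h
    · exact abs_eq_zero.1 h
    · exact absurd h h1.ne'
  have hf10 : f (1, 0) = 0 := by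
    have : f (1, 0) + v * n = 0 := hm
    rw [hn] at this
    linarith
  obtain ⟨a, ha⟩ := hint
  have := hf a ha
  rw [hlin a, hlin (d, c), hf10, hn] at this
  simp at this

/-- The Blaschke–Santaló inequality in the plane. The point `z` is the crossing point of two lines
that quarter the area of `K`; each of the four dual sectors of `K^z` has area at most
`4 (π / 4)² / |K|`. -/
theorem blaschke_santalo {K : Set (ℝ × ℝ)} (hconv : Convex ℝ K) (hcomp : IsCompact K)
    (hint : (interior K).Nonempty) :
    ∃ z ∈ interior K, volume K * volume (polarDual K z) ≤ ENNReal.ofReal (π ^ 2) := by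
  have h0 : volume K ≠ 0 := (Measure.measure_pos_of_nonempty_interior _ hint).ne'
  obtain ⟨d, c, v, hq⟩ := exists_quartering hcomp.measurableSet h0 hcomp.isBounded
  refine ⟨(d, c), mem_interior_of_quartering hconv hint (d := d) (c := c) (v := v) ?_,
    ?_⟩
  · intro σ τ hσ hτ
    refine nonempty_of_measure_ne_zero (μ := volume) fun h => h0 ?_
    have := hq σ τ hσ hτ
    rw [h] at this
    simpa using this
  set P := polarDual K (d, c) with hP
  set B : ℝ → ℝ → Set (ℝ × ℝ) :=
    fun σ τ => P ∩ {p : ℝ × ℝ | 0 < σ * (p.1 + v * p.2) ∧ 0 < τ * p.2} with hB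
  have hpart : ∀ σ τ : ℝ, (σ = 1 ∨ σ = -1) → (τ = 1 ∨ τ = -1) →
      volume K * volume (B σ τ) ≤ 4 * ENNReal.ofReal ((π / 4) ^ 2) := by
    intro σ τ hσ hτ
    refine (mul_le_mul_left (hq σ τ hσ hτ) _).trans ?_
    rw [mul_assoc]
    gcongr 4 * ?_
    exact sector_bound hcomp.measurableSet (isClosed_polarDual _ _).measurableSet
      (fun k hk y hy => hy k hk) hσ hτ
  have hN1 : volume {p : ℝ × ℝ | p.2 = 0} = 0 := by simpa using line_null 0 0 0
  have hN2 : volume {p : ℝ × ℝ | p.1 + v * p.2 = 0} = 0 := by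
    have := volume_preimage_matrix (a := 1) (b := v) (c := 0) (d := 1) (by norm_num)
      {p : ℝ × ℝ | p.1 = 0}
    rw [vline_null, mul_zero] at this
    simpa using! this
  have hcover : P ⊆ (B 1 1 ∪ B 1 (-1)) ∪ (B (-1) 1 ∪ B (-1) (-1)) ∪
      ({p : ℝ × ℝ | p.2 = 0} ∪ {p : ℝ × ℝ | p.1 + v * p.2 = 0}) := by
    intro p hp
    rcases lt_trichotomy (p.1 + v * p.2) 0 with h1 | h1 | h1
    · rcases lt_trichotomy p.2 0 with h2 | h2 | h2
      · exact Or.inl (Or.inr (Or.inr ⟨hp, by linarith, by linarith⟩))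
      · exact Or.inr (Or.inl h2)
      · exact Or.inl (Or.inr (Or.inl ⟨hp, by linarith, by linarith⟩))
    · exact Or.inr (Or.inr h1)
    · rcases lt_trichotomy p.2 0 with h2 | h2 | h2
      · exact Or.inl (Or.inl (Or.inr ⟨hp, by linarith, by linarith⟩))
      · exact Or.inr (Or.inl h2)
      · exact Or.inl (Or.inl (Or.inl ⟨hp, by linarith, by linarith⟩))
  have hvol : volume P ≤ (volume (B 1 1) + volume (B 1 (-1))) +
      (volume (B (-1) 1) + volume (B (-1) (-1))) := by
    refine (measure_mono hcover).trans ((measure_union_le _ _).trans ?_)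
    have hz : volume ({p : ℝ × ℝ | p.2 = 0} ∪ {p : ℝ × ℝ | p.1 + v * p.2 = 0}) = 0 :=
      measure_union_null hN1 hN2
    rw [hz, add_zero]
    exact (measure_union_le _ _).trans (add_le_add (measure_union_le _ _) (measure_union_le _ _))
  calc volume K * volume P ≤ volume K * ((volume (B 1 1) + volume (B 1 (-1))) +
        (volume (B (-1) 1) + volume (B (-1) (-1)))) := by gcongr
    _ = (volume K * volume (B 1 1) + volume K * volume (B 1 (-1))) +
        (volume K * volume (B (-1) 1) + volume K * volume (B (-1) (-1))) := by ring
    _ ≤ (4 * ENNReal.ofReal ((π / 4) ^ 2) + 4 * ENNReal.ofReal ((π / 4) ^ 2)) +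
        (4 * ENNReal.ofReal ((π / 4) ^ 2) + 4 * ENNReal.ofReal ((π / 4) ^ 2)) := by
        exact add_le_add
          (add_le_add (hpart 1 1 (by simp) (by simp)) (hpart 1 (-1) (by simp) (by simp)))
          (add_le_add (hpart (-1) 1 (by simp) (by simp)) (hpart (-1) (-1) (by simp) (by simp)))
    _ = ENNReal.ofReal 16 * ENNReal.ofReal ((π / 4) ^ 2) := by
        rw [show ENNReal.ofReal 16 = 16 by norm_num]; ring
    _ = ENNReal.ofReal (π ^ 2) := by
        rw [← ENNReal.ofReal_mul (by norm_num)]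
        congr 1
        ring

/-! ### Areas in polar coordinates and from support functions -/

/-- Area in polar coordinates, the angle running over `(-π, π)`. -/
theorem volume_eq_polar {S : Set (ℝ × ℝ)} (hS : MeasurableSet S) :
    volume S = ∫⁻ φ in Ioo (-π) π, ∫⁻ s in Ioi (0:ℝ),
      ENNReal.ofReal s * S.indicator 1 (s • uVec φ) := by
  have h1 := lintegral_comp_polarCoord_symm (S.indicator 1)
  rw [lintegral_indicator_one hS] at h1
  rw [← h1, polarCoord_target, Measure.volume_eq_prod, ← Measure.prod_restrict,
    lintegral_prod_symm']
  · refine lintegral_congr fun φ => lintegral_congr fun s => ?_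
    simp [uVec]
  · have : Measurable (S.indicator (1 : ℝ × ℝ → ENNReal)) := measurable_one.indicator hS
    exact (ENNReal.measurable_ofReal.comp measurable_fst).mul
      (this.comp continuous_polarCoord_symm.measurable)

theorem lintegral_radius {ρ : ℝ} (hρ : 0 ≤ ρ) :
    ∫⁻ s in Ioc (0:ℝ) ρ, ENNReal.ofReal s = ENNReal.ofReal (ρ ^ 2 / 2) := by
  rw [← ofReal_integral_eq_lintegral_ofReal]
  · rw [← intervalIntegral.integral_of_le hρ, integral_id]
    simp
  · exact (continuous_id.intervalIntegrable 0 ρ).1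
  · exact (ae_restrict_iff' measurableSet_Ioc).2 (Filter.Eventually.of_forall fun s hs => hs.1.le)

theorem lintegral_sq_half {ρ : ℝ → ℝ} (hc : Continuous ρ) (hp : ∀ φ, ρ (φ + 2 * π) = ρ φ) :
    ∫⁻ φ in Ioo (-π) π, ENNReal.ofReal (ρ φ ^ 2 / 2) =
      ENNReal.ofReal (∫ φ in (0:ℝ)..2 * π, ρ φ ^ 2 / 2) := by
  have hc' : Continuous fun φ => ρ φ ^ 2 / 2 := by fun_prop
  have hper : Function.Periodic (fun φ => ρ φ ^ 2 / 2) (2 * π) := fun φ => by simp only [hp]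
  have h1 := hper.intervalIntegral_add_eq 0 (-π)
  rw [zero_add, show -π + 2 * π = π by ring] at h1
  rw [h1, restrict_Ioo_eq_restrict_Ioc, intervalIntegral.integral_of_le (by linarith [Real.pi_pos]),
    ofReal_integral_eq_lintegral_ofReal]
  · exact (hc'.intervalIntegrable _ _).1
  · exact Filter.Eventually.of_forall fun φ => by positivity

/-- A set containing the star body of radial function `ρ` has area at least `½ ∫ ρ²`. -/
theorem le_volume_of_star {S : Set (ℝ × ℝ)} (hS : MeasurableSet S) {ρ : ℝ → ℝ} (hc : Continuous ρ)
    (hp : ∀ φ, ρ (φ + 2 * π) = ρ φ) (hρ : ∀ φ, 0 < ρ φ)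
    (h : ∀ φ s, 0 < s → s ≤ ρ φ → s • uVec φ ∈ S) :
    ENNReal.ofReal (∫ φ in (0:ℝ)..2 * π, ρ φ ^ 2 / 2) ≤ volume S := by
  rw [← lintegral_sq_half hc hp, volume_eq_polar hS]
  refine lintegral_mono fun φ => ?_
  rw [← lintegral_radius (hρ φ).le]
  calc ∫⁻ s in Ioc (0:ℝ) (ρ φ), ENNReal.ofReal s =
        ∫⁻ s in Ioc (0:ℝ) (ρ φ), ENNReal.ofReal s * S.indicator 1 (s • uVec φ) := by
        refine setLIntegral_congr_fun measurableSet_Ioc fun s hs => ?_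
        simp [indicator_of_mem (h φ s hs.1 hs.2)]
    _ ≤ _ := lintegral_mono_set Ioc_subset_Ioi_self

/-- A set contained in the star body of radial function `ρ` has area at most `½ ∫ ρ²`. -/
theorem volume_le_of_star {S : Set (ℝ × ℝ)} (hS : MeasurableSet S) {ρ : ℝ → ℝ} (hc : Continuous ρ)
    (hp : ∀ φ, ρ (φ + 2 * π) = ρ φ) (hρ : ∀ φ, 0 < ρ φ)
    (h : ∀ φ s, 0 < s → s • uVec φ ∈ S → s ≤ ρ φ) :
    volume S ≤ ENNReal.ofReal (∫ φ in (0:ℝ)..2 * π, ρ φ ^ 2 / 2) := by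
  rw [← lintegral_sq_half hc hp, volume_eq_polar hS]
  refine lintegral_mono fun φ => ?_
  rw [← lintegral_radius (hρ φ).le, ← lintegral_indicator measurableSet_Ioi,
    ← lintegral_indicator measurableSet_Ioc]
  refine lintegral_mono fun s => ?_
  by_cases hs : s ∈ Ioi (0:ℝ)
  · rw [indicator_of_mem hs]
    by_cases hsS : s • uVec φ ∈ S
    · rw [indicator_of_mem (show s ∈ Ioc 0 (ρ φ) from ⟨hs, h φ s hs hsS⟩)]
      simp [hsS]
    · simp [hsS]
  · rw [indicator_of_notMem hs]
    exact bot_le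

theorem exists_polar (p : ℝ × ℝ) : ∃ s φ : ℝ, 0 ≤ s ∧ p = s • uVec φ := by
  refine ⟨‖(⟨p.1, p.2⟩ : ℂ)‖, Complex.arg ⟨p.1, p.2⟩, norm_nonneg _, ?_⟩
  ext
  · simp [uVec, Complex.norm_mul_cos_arg]
  · simp [uVec, Complex.norm_mul_sin_arg]

section dual
variable {h h' h'' : ℝ → ℝ}

/-- A support function with `h + h'' > 0` dominates strictly the support function of each point of
the curve it envelops, away from the tangency. -/
theorem support_lt (h1 : ∀ x, HasDerivAt h (h' x) x) (h2 : ∀ x, HasDerivAt h' (h'' x) x)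
    (hpos : ∀ x, 0 < h x + h'' x) (hp : ∀ x, h (x + 2 * π) = h x) {φ ψ : ℝ} (hne : φ ≠ ψ)
    (hlt : |ψ - φ| < 2 * π) : h φ * cos (ψ - φ) + h' φ * sin (ψ - φ) < h ψ := by
  have hpi := Real.pi_pos
  -- The quantity `h' s * sin (ψ - s) + h s * cos (ψ - s)` interpolates between the two sides, and
  -- its derivative is `(h s + h'' s) * sin (ψ - s)`.
  have dG : ∀ ψ s, HasDerivAt (fun s => h s * cos (ψ - s) + h' s * sin (ψ - s))
      ((h s + h'' s) * sin (ψ - s)) s := by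
    intro ψ s
    have e : HasDerivAt (fun s => ψ - s) (-1) s := by
      simpa using (hasDerivAt_id s).const_sub ψ
    convert! ((h1 s).mul e.cos).add ((h2 s).mul e.sin) using 1
    ring
  have cG : ∀ ψ, Continuous fun s => h s * cos (ψ - s) + h' s * sin (ψ - s) := fun ψ =>
    continuous_iff_continuousAt.2 fun s => (dG ψ s).continuousAt
  have right : ∀ ψ, φ < ψ → ψ ≤ φ + π → h φ * cos (ψ - φ) + h' φ * sin (ψ - φ) < h ψ := by
    intro ψ hlt hle
    have hm := strictMonoOn_of_deriv_pos (convex_Icc φ ψ) (cG ψ).continuousOn (fun s hs => by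
      rw [interior_Icc] at hs
      rw [(dG ψ s).deriv]
      exact mul_pos (hpos s) (sin_pos_of_pos_of_lt_pi (by linarith [hs.2]) (by linarith [hs.1])))
    have := hm (left_mem_Icc.2 hlt.le) (right_mem_Icc.2 hlt.le) hlt
    simpa using this
  have left : ∀ ψ, ψ < φ → φ - π ≤ ψ → h φ * cos (ψ - φ) + h' φ * sin (ψ - φ) < h ψ := by
    intro ψ hlt hle
    have hm := strictAntiOn_of_deriv_neg (convex_Icc ψ φ) (cG ψ).continuousOn (fun s hs => by
      rw [interior_Icc] at hs
      rw [(dG ψ s).deriv]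
      exact mul_neg_of_pos_of_neg (hpos s)
        (sin_neg_of_neg_of_neg_pi_lt (by linarith [hs.1]) (by linarith [hs.2])))
    have := hm (left_mem_Icc.2 hlt.le) (right_mem_Icc.2 hlt.le) hlt
    simpa using this
  rw [abs_lt] at hlt
  rcases lt_or_gt_of_ne hne with hφ | hφ
  · rcases le_or_gt ψ (φ + π) with hψ | hψ
    · exact right ψ hφ hψ
    · have := left (ψ - 2 * π) (by linarith) (by linarith)
      rw [← hp (ψ - 2 * π), sub_add_cancel, show ψ - 2 * π - φ = ψ - φ - 2 * π by ring,
        cos_sub_two_pi, sin_sub_two_pi] at this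
      exact this
  · rcases le_or_gt (φ - π) ψ with hψ | hψ
    · exact left ψ hφ hψ
    · have := right (ψ + 2 * π) (by linarith) (by linarith)
      rw [hp, show ψ + 2 * π - φ = ψ - φ + 2 * π by ring, cos_add_two_pi, sin_add_two_pi] at this
      exact this

/-- A support function with `h + h'' > 0` dominates the support function of each point of the curve
it envelops. -/
theorem support_le (h1 : ∀ x, HasDerivAt h (h' x) x) (h2 : ∀ x, HasDerivAt h' (h'' x) x)
    (hpos : ∀ x, 0 < h x + h'' x) (hp : ∀ x, h (x + 2 * π) = h x) (φ ψ : ℝ) :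
    h φ * cos (ψ - φ) + h' φ * sin (ψ - φ) ≤ h ψ := by
  have h2pi : (0:ℝ) < 2 * π := by positivity
  have hmem := toIcoMod_mem_Ico h2pi φ ψ
  have hψ : ψ = toIcoMod h2pi φ ψ + toIcoDiv h2pi φ ψ * (2 * π) := by
    have := toIcoMod_add_toIcoDiv_zsmul h2pi φ ψ
    rw [zsmul_eq_mul] at this
    exact this.symm
  set χ := toIcoMod h2pi φ ψ
  set n := toIcoDiv h2pi φ ψ
  have hper : Function.Periodic h (2 * π) := hp
  rw [hψ, show χ + n * (2 * π) - φ = χ - φ + n * (2 * π) by ring, cos_add_int_mul_two_pi,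
    sin_add_int_mul_two_pi, hper.int_mul n χ]
  rcases eq_or_ne φ χ with he | hne
  · rw [← he]; simp
  · exact (support_lt h1 h2 hpos hp hne (by rw [abs_lt]; constructor <;> linarith [hmem.1, hmem.2])).le

/-- The area enclosed by the curve with support function `h` is at least `(1/2) ∫ h (h + h'')`. The
curve is `η(φ) = h(φ) u(φ) + h'(φ) u(φ + π/2)`; the map `(s, φ) ↦ s η(φ)` has Jacobian
`s h (h + h'')`, and `support_lt` makes it injective. -/
theorem le_volume_of_support (h1 : ∀ x, HasDerivAt h (h' x) x) (h2 : ∀ x, HasDerivAt h' (h'' x) x)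
    (hc : Continuous h'') (h0 : ∀ x, 0 < h x)
    (hpos : ∀ x, 0 < h x + h'' x) (hp : ∀ x, h (x + 2 * π) = h x) {Q : Set (ℝ × ℝ)}
    (hQ : ∀ φ s, 0 < s → s < 1 →
      (s * (h φ * cos φ - h' φ * sin φ), s * (h φ * sin φ + h' φ * cos φ)) ∈ Q) :
    ENNReal.ofReal ((1 / 2) * ∫ φ in (0:ℝ)..2 * π, h φ * (h φ + h'' φ)) ≤ volume Q := by
  have hch : Continuous h := continuous_iff_continuousAt.2 fun x => (h1 x).continuousAt
  set e1 : ℝ → ℝ := fun φ => h φ * cos φ - h' φ * sin φ with he1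
  set e2 : ℝ → ℝ := fun φ => h φ * sin φ + h' φ * cos φ with he2
  have d1 : ∀ φ, HasDerivAt e1 (-((h φ + h'' φ) * sin φ)) φ := by
    intro φ
    convert! ((h1 φ).mul (hasDerivAt_cos φ)).sub ((h2 φ).mul (hasDerivAt_sin φ)) using 1
    ring
  have d2 : ∀ φ, HasDerivAt e2 ((h φ + h'' φ) * cos φ) φ := by
    intro φ
    convert! ((h1 φ).mul (hasDerivAt_sin φ)).add ((h2 φ).mul (hasDerivAt_cos φ)) using 1
    ring
  set f : ℝ × ℝ → ℝ × ℝ := fun p => (p.1 * e1 p.2, p.1 * e2 p.2) with hf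
  set f' : ℝ × ℝ → (ℝ × ℝ →L[ℝ] ℝ × ℝ) := fun p =>
    (Matrix.toLin (.finTwoProd ℝ) (.finTwoProd ℝ)
      !![e1 p.2, p.1 * -((h p.2 + h'' p.2) * sin p.2);
        e2 p.2, p.1 * ((h p.2 + h'' p.2) * cos p.2)]).toContinuousLinearMap with hf'
  have hder : ∀ p, HasFDerivAt f (f' p) p := by
    intro p
    simp only [hf']
    rw [Matrix.toLin_finTwoProd_toContinuousLinearMap]
    convert! HasFDerivAt.prodMk (𝕜 := ℝ)
      (hasFDerivAt_fst.mul ((d1 p.2).comp_hasFDerivAt p hasFDerivAt_snd))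
      (hasFDerivAt_fst.mul ((d2 p.2).comp_hasFDerivAt p hasFDerivAt_snd)) using 2
    · simp [smul_smul, add_comm]
      exact neg_smul (M := ℝ × ℝ →L[ℝ] ℝ) _ _
    · simp [smul_smul, add_comm]
  have hdet : ∀ p, (f' p).det = p.1 * (h p.2 * (h p.2 + h'' p.2)) := by
    intro p
    simp only [hf', LinearMap.det_toContinuousLinearMap, LinearMap.det_toLin,
      Matrix.det_fin_two_of, he1, he2]
    linear_combination p.1 * (h p.2 * (h p.2 + h'' p.2)) * sin_sq_add_cos_sq p.2
  -- The pairing with the direction `ψ` of the point of the curve with normal angle `φ`.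
  have pair : ∀ φ ψ, e1 φ * cos ψ + e2 φ * sin ψ = h φ * cos (ψ - φ) + h' φ * sin (ψ - φ) := by
    intro φ ψ
    rw [cos_sub, sin_sub]
    simp only [he1, he2]
    ring
  have hinj : InjOn f (Ioo (0:ℝ) 1 ×ˢ Ioo 0 (2 * π)) := by
    rintro ⟨s, φ⟩ ⟨hs, hφ⟩ ⟨t, ψ⟩ ⟨ht, hψ⟩ hst
    simp only [hf, Prod.mk.injEq] at hst
    simp only [mem_Ioo] at hs hφ ht hψ
    have key : ∀ θ, s * (h φ * cos (θ - φ) + h' φ * sin (θ - φ)) =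
        t * (h ψ * cos (θ - ψ) + h' ψ * sin (θ - ψ)) := by
      intro θ
      rw [← pair, ← pair]
      linear_combination cos θ * hst.1 + sin θ * hst.2
    by_cases hφψ : φ = ψ
    · subst hφψ
      have := key φ
      simp only [sub_self, cos_zero, sin_zero, mul_one, mul_zero, add_zero] at this
      have := mul_right_cancel₀ (h0 φ).ne' this
      rw [this]
    · exfalso
      have a1 := support_lt h1 h2 hpos hp hφψ (by rw [abs_lt]; constructor <;> linarith)
      have a2 := support_lt h1 h2 hpos hp (Ne.symm hφψ) (by rw [abs_lt]; constructor <;> linarith)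
      have k1 := key ψ
      have k2 := key φ
      simp only [sub_self, cos_zero, sin_zero, mul_one, mul_zero, add_zero] at k1 k2
      have b1 := mul_lt_mul_of_pos_left a1 hs.1
      have b2 := mul_lt_mul_of_pos_left a2 ht.1
      rw [k1] at b1
      rw [← k2] at b2
      have c1 := lt_of_mul_lt_mul_right b1 (h0 ψ).le
      have c2 := lt_of_mul_lt_mul_right b2 (h0 φ).le
      linarith
  have hk : Continuous fun φ => h φ * (h φ + h'' φ) := by fun_prop
  have area := lintegral_abs_det_fderiv_eq_addHaar_image volume
    (measurableSet_Ioo.prod measurableSet_Ioo) (fun p _ => (hder p).hasFDerivWithinAt) hinj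
  have hsub : f '' (Ioo (0:ℝ) 1 ×ˢ Ioo 0 (2 * π)) ⊆ Q := by
    rintro _ ⟨p, hp, rfl⟩
    exact hQ p.2 p.1 hp.1.1 hp.1.2
  refine le_trans (le_of_eq ?_) (measure_mono hsub)
  rw [← area]
  have hpi := Real.pi_pos
  have i1 : ∫⁻ s in Ioo (0:ℝ) 1, ENNReal.ofReal s = ENNReal.ofReal (1 / 2) := by
    rw [restrict_Ioo_eq_restrict_Ioc, lintegral_radius zero_le_one]
    norm_num
  have i2 : ∫⁻ φ in Ioo (0:ℝ) (2 * π), ENNReal.ofReal (h φ * (h φ + h'' φ)) =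
      ENNReal.ofReal (∫ φ in (0:ℝ)..2 * π, h φ * (h φ + h'' φ)) := by
    rw [restrict_Ioo_eq_restrict_Ioc, intervalIntegral.integral_of_le (by linarith),
      ofReal_integral_eq_lintegral_ofReal]
    · exact (hk.intervalIntegrable _ _).1
    · exact Filter.Eventually.of_forall fun φ => (mul_pos (h0 φ) (hpos φ)).le
  rw [ENNReal.ofReal_mul (by norm_num), ← i1, ← i2, ← lintegral_prod_mul, Measure.prod_restrict,
    ← Measure.volume_eq_prod]
  · refine setLIntegral_congr_fun (measurableSet_Ioo.prod measurableSet_Ioo) fun p hp => ?_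
    rw [hdet, abs_of_pos (mul_pos hp.1.1 (mul_pos (h0 _) (hpos _))), ENNReal.ofReal_mul hp.1.1.le]
  · fun_prop
  · fun_prop

end dual

/-! ### Radial functions, the Cauchy–Schwarz inequality and its equality case -/

theorem HasC2PosCurvBoundary.hasDerivAt {K : Set (ℝ × ℝ)} {O : ℝ × ℝ} {r : ℝ → ℝ}
    (hbd : HasC2PosCurvBoundary K O r) :
    (∀ x, HasDerivAt r (deriv r x) x) ∧ (∀ x, HasDerivAt (deriv r) (deriv (deriv r) x) x) ∧
      Continuous (deriv (deriv r)) := by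
  have h2 : ContDiff ℝ (1 + 1) r := by
    have := hbd.2.1
    norm_num
    exact this
  rw [contDiff_succ_iff_deriv] at h2
  have h3 := contDiff_one_iff_deriv.1 h2.2.2
  exact ⟨fun x => (h2.1 x).hasDerivAt, fun x => (h3.1 x).hasDerivAt, h3.2⟩

/-- With `HasC2PosCurvBoundary.le_of_smul_mem`: `K` is the star body of radial function `r`. -/
theorem HasC2PosCurvBoundary.smul_mem {K : Set (ℝ × ℝ)} {r : ℝ → ℝ} (hconv : Convex ℝ K)
    (hcl : IsClosed K) (hbd : HasC2PosCurvBoundary K 0 r) {φ s : ℝ} (hs : 0 ≤ s) (hsr : s ≤ r φ) :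
    s • uVec φ ∈ K := by
  obtain ⟨h0, -, -, hr, -, hfr⟩ := hbd
  have hγ : r φ • uVec φ ∈ K := by
    have : r φ • uVec φ ∈ frontier K := by
      rw [hfr]
      exact ⟨φ, by simp⟩
    exact hcl.frontier_subset this
  have := hconv.smul_mem_of_zero_mem (interior_subset h0) hγ
    (t := s / r φ) ⟨div_nonneg hs (hr φ).le, (div_le_one (hr φ)).2 hsr⟩
  rwa [smul_smul, div_mul_cancel₀ _ (hr φ).ne'] at this

theorem HasC2PosCurvBoundary.le_of_smul_mem {K : Set (ℝ × ℝ)} {r : ℝ → ℝ} (hconv : Convex ℝ K)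
    (hbd : HasC2PosCurvBoundary K 0 r) {φ s : ℝ} (hs : s • uVec φ ∈ K) : s ≤ r φ := by
  obtain ⟨h0, -, -, hr, -, hfr⟩ := hbd
  by_contra! hlt
  have hs0 : 0 < s := (hr φ).trans hlt
  have hγ : r φ • uVec φ ∈ frontier K := by
    rw [hfr]
    exact ⟨φ, by simp⟩
  refine hγ.2 (hconv.openSegment_interior_self_subset_interior h0 hs ⟨1 - r φ / s, r φ / s,
    sub_pos.2 ((div_lt_one hs0).2 hlt), div_pos (hr φ) hs0, by ring, ?_⟩)
  rw [smul_zero, zero_add, smul_smul, div_mul_cancel₀ _ hs0.ne']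

/-- The Blaschke–Santaló inequality in terms of the radial function: the area of `K` is
`½ ∫ r²` and that of its dual `½ ∫ h (h + h'')` with `h = 1 / r` the support function of the polar dual. -/
theorem integral_mul_integral_le {K : Set (ℝ × ℝ)} (hconv : Convex ℝ K) (hcomp : IsCompact K)
    (hint : (interior K).Nonempty) {r : ℝ → ℝ} (hbd : HasC2PosCurvBoundary K 0 r)
    (hsant : IsSantaloPoint K 0) :
    (∫ φ in (0:ℝ)..2 * π,
      (r φ ^ 2 + 2 * (deriv r φ) ^ 2 - r φ * deriv (deriv r) φ) / r φ ^ 4) *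
      (∫ φ in (0:ℝ)..2 * π, r φ ^ 2) ≤ 4 * π ^ 2 := by
  obtain ⟨d1, d2, hc⟩ := hbd.hasDerivAt
  have hr := hbd.2.2.2.1
  have hp := hbd.2.2.1
  have hχ := hbd.2.2.2.2.1
  have hrc : Continuous r := hbd.2.1.continuous
  have hrc' : Continuous (deriv r) := continuous_iff_continuousAt.2 fun x => (d2 x).continuousAt
  set h : ℝ → ℝ := fun φ => (r φ)⁻¹ with hh
  set h' : ℝ → ℝ := fun φ => -deriv r φ / r φ ^ 2 with hh'
  set h'' : ℝ → ℝ := fun φ => -deriv (deriv r) φ / r φ ^ 2 + 2 * deriv r φ ^ 2 / r φ ^ 3 with hh''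
  have e1 : ∀ x, HasDerivAt h (h' x) x := fun x => (d1 x).inv (hr x).ne'
  have e2 : ∀ x, HasDerivAt h' (h'' x) x := by
    intro x
    have := (hr x).ne'
    convert! (d2 x).neg.div ((d1 x).pow 2) (pow_ne_zero 2 this) using 1
    simp only [hh'', Pi.pow_apply, Pi.neg_apply]
    field_simp
    ring
  have hsum : ∀ x, h x + h'' x =
      (r x ^ 2 + 2 * (deriv r x) ^ 2 - r x * deriv (deriv r) x) / r x ^ 3 := by
    intro x
    have := (hr x).ne'
    simp only [hh, hh'']
    field_simp
    ring
  have hpos : ∀ x, 0 < h x + h'' x := by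
    intro x
    rw [hsum]
    exact div_pos (hχ x) (pow_pos (hr x) 3)
  have hper : ∀ x, h (x + 2 * π) = h x := fun x => by simp only [hh, hp]
  have hcont : Continuous h'' := by
    have : ∀ x, r x ≠ 0 := fun x => (hr x).ne'
    simp only [hh'']
    fun_prop (disch := simp [this])
  have hK := le_volume_of_star hcomp.measurableSet hrc hp hr
    fun φ s hs hsr => hbd.smul_mem hconv hcomp.isClosed hs.le hsr
  have hK' : ENNReal.ofReal ((1 / 2) * ∫ φ in (0:ℝ)..2 * π, h φ * (h φ + h'' φ)) ≤
      volume (polarDual K 0) := by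
    refine le_volume_of_support e1 e2 hcont (fun x => inv_pos.2 (hr x)) hpos hper ?_
    intro φ s hs hs1 c hc
    obtain ⟨t, ψ, ht, rfl⟩ := exists_polar c
    have htr := hbd.le_of_smul_mem hconv hc
    have hsup := support_le e1 e2 hpos hper φ ψ
    have : t * (h φ * cos (ψ - φ) + h' φ * sin (ψ - φ)) ≤ 1 :=
      calc _ ≤ t * h ψ := by gcongr
        _ ≤ r ψ * h ψ := by
          gcongr
          exact (inv_pos.2 (hr ψ)).le
        _ = 1 := mul_inv_cancel₀ (hr ψ).ne'
    have h3 : s * (t * (h φ * cos (ψ - φ) + h' φ * sin (ψ - φ))) ≤ 1 := by nlinarith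
    rw [cos_sub, sin_sub] at h3
    simp only [uVec, Prod.smul_mk, smul_eq_mul, Prod.fst_zero, Prod.snd_zero]
    linarith
  obtain ⟨z, hz, hzv⟩ := blaschke_santalo hconv hcomp hint
  have hprod := (mul_le_mul' hK (hK'.trans (hsant.2 z hz))).trans hzv
  have n1 : 0 ≤ ∫ φ in (0:ℝ)..2 * π, r φ ^ 2 / 2 :=
    intervalIntegral.integral_nonneg (by positivity) fun φ _ => by positivity
  rw [← ENNReal.ofReal_mul n1, ENNReal.ofReal_le_ofReal_iff (by positivity)] at hprod
  have i1 : (∫ φ in (0:ℝ)..2 * π, h φ * (h φ + h'' φ)) = ∫ φ in (0:ℝ)..2 * π,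
      (r φ ^ 2 + 2 * (deriv r φ) ^ 2 - r φ * deriv (deriv r) φ) / r φ ^ 4 := by
    congr 1
    ext φ
    have := (hr φ).ne'
    rw [hsum]
    simp only [hh]
    field_simp
  rw [i1, intervalIntegral.integral_div] at hprod
  linarith

/-- The Cauchy–Schwarz inequality with its equality case, for continuous functions. -/
theorem integral_mul_sq_le {p q : ℝ → ℝ} (hp : Continuous p) (hq : Continuous q)
    (hq0 : ∀ x, 0 < q x) {T : ℝ} (hT : 0 < T) :
    (∫ x in (0:ℝ)..T, p x * q x) ^ 2 ≤ (∫ x in (0:ℝ)..T, p x ^ 2) * (∫ x in (0:ℝ)..T, q x ^ 2) ∧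
    ((∫ x in (0:ℝ)..T, p x ^ 2) * (∫ x in (0:ℝ)..T, q x ^ 2) ≤ (∫ x in (0:ℝ)..T, p x * q x) ^ 2 →
      ∃ t, ∀ x ∈ Icc (0:ℝ) T, p x = t * q x) := by
  set I := ∫ x in (0:ℝ)..T, p x * q x
  set P := ∫ x in (0:ℝ)..T, p x ^ 2
  set Q := ∫ x in (0:ℝ)..T, q x ^ 2
  have hQ : 0 < Q := intervalIntegral.intervalIntegral_pos_of_pos
    ((hq.pow 2).intervalIntegrable _ _) (fun x => pow_pos (hq0 x) 2) hT
  set t := I / Q with ht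
  have key : (∫ x in (0:ℝ)..T, (p x - t * q x) ^ 2) = P - I ^ 2 / Q := by
    have : ∀ x, (p x - t * q x) ^ 2 = p x ^ 2 - 2 * t * (p x * q x) + t ^ 2 * q x ^ 2 :=
      fun x => by ring
    simp only [this]
    rw [intervalIntegral.integral_add, intervalIntegral.integral_sub,
      intervalIntegral.integral_const_mul, intervalIntegral.integral_const_mul]
    · change P - 2 * t * I + t ^ 2 * Q = _
      rw [ht]
      field_simp
      ring
    all_goals exact Continuous.intervalIntegrable (by fun_prop) _ _
  have hn : 0 ≤ ∫ x in (0:ℝ)..T, (p x - t * q x) ^ 2 :=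
    intervalIntegral.integral_nonneg hT.le fun x _ => sq_nonneg _
  constructor
  · rw [key, sub_nonneg, div_le_iff₀ hQ] at hn
    exact hn
  · intro hle
    refine ⟨t, ?_⟩
    by_contra! hne
    obtain ⟨x, hx, hxne⟩ := hne
    have : 0 < ∫ x in (0:ℝ)..T, (p x - t * q x) ^ 2 :=
      intervalIntegral.integral_pos hT (by fun_prop) (fun x _ => sq_nonneg _)
        ⟨x, hx, by have := sub_ne_zero.2 hxne; positivity⟩
    rw [key, sub_pos, div_lt_iff₀ hQ] at this
    linarith

theorem eq_const_of_hasDerivAt_zero {f : ℝ → ℝ} (hf : ∀ x, HasDerivAt f 0 x) (x : ℝ) :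
    f x = f 0 :=
  is_const_of_deriv_eq_zero (fun x => (hf x).differentiableAt) (fun x => (hf x).deriv) x 0

/-- A positive function `r` with `χ = c r⁶` is such that `r⁻²` is a positive definite
quadratic form in `(cos φ, sin φ)`. -/
theorem exists_quadratic {r r' r'' : ℝ → ℝ} (d1 : ∀ x, HasDerivAt r (r' x) x)
    (d2 : ∀ x, HasDerivAt r' (r'' x) x) (hr : ∀ x, 0 < r x) {c : ℝ}
    (hχ : ∀ x, r x ^ 2 + 2 * r' x ^ 2 - r x * r'' x = c * r x ^ 6) :
    ∃ A B C : ℝ, 0 < A ∧ 0 < A * C - B ^ 2 ∧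
      ∀ φ, r φ ^ 2 * (A * cos φ ^ 2 + 2 * B * cos φ * sin φ + C * sin φ ^ 2) = 1 := by
  -- With `g = r⁻²` the hypothesis reads `g g'' / 2 - g'² / 4 + g² = c`; it has the first integral
  -- `E = (g'² / 4 + c) / g + g`, whose constancy turns it into `g'' + 4 g = 2 E`.
  set g : ℝ → ℝ := fun x => (r x ^ 2)⁻¹ with hg
  set g' : ℝ → ℝ := fun x => -2 * r' x / r x ^ 3 with hg'
  set g'' : ℝ → ℝ := fun x => -2 * r'' x / r x ^ 3 + 6 * r' x ^ 2 / r x ^ 4 with hg''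
  have gpos : ∀ x, 0 < g x := fun x => inv_pos.2 (pow_pos (hr x) 2)
  have e1 : ∀ x, HasDerivAt g (g' x) x := by
    intro x
    have := (hr x).ne'
    convert! ((d1 x).pow 2).inv (pow_ne_zero 2 this) using 1
    simp only [hg']
    field_simp
    norm_num
    ring
  have e2 : ∀ x, HasDerivAt g' (g'' x) x := by
    intro x
    have := (hr x).ne'
    convert! ((d2 x).const_mul (-2)).div ((d1 x).pow 3) (pow_ne_zero 3 this) using 1
    simp only [hg'']
    field_simp
    norm_num
    ring
  have ode : ∀ x, g x * g'' x / 2 - g' x ^ 2 / 4 + g x ^ 2 = c := by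
    intro x
    have := (hr x).ne'
    simp only [hg, hg', hg'']
    field_simp
    linear_combination 8 * hχ x
  have hE : ∀ x, HasDerivAt (fun x => (g' x ^ 2 / 4 + c) / g x + g x) 0 x := by
    intro x
    have := (gpos x).ne'
    convert! (((((e2 x).pow 2).div_const 4).add_const c).div (e1 x) this).add (e1 x) using 1
    simp only [Pi.pow_apply]
    field_simp
    norm_num
    linear_combination -(4 * g' x) * ode x
  obtain ⟨E, hEq⟩ : ∃ E, ∀ x, (g' x ^ 2 / 4 + c) / g x + g x = E :=
    ⟨_, fun x => eq_const_of_hasDerivAt_zero hE x⟩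
  have lin : ∀ x, g'' x = 2 * E - 4 * g x := by
    intro x
    have := (gpos x).ne'
    rw [← hEq x, ← ode x]
    field_simp
    ring
  have c2 : ∀ x, HasDerivAt (fun x => cos (2 * x)) (-(2 * sin (2 * x))) x := by
    intro x
    convert! ((hasDerivAt_id x).const_mul 2).cos using 1
    simp
    ring
  have s2 : ∀ x, HasDerivAt (fun x => sin (2 * x)) (2 * cos (2 * x)) x := by
    intro x
    convert! ((hasDerivAt_id x).const_mul 2).sin using 1
    simp
    ring
  have hα : ∀ x, HasDerivAt (fun x => (g x - E / 2) * cos (2 * x) - g' x / 2 * sin (2 * x)) 0 x := by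
    intro x
    convert! (((e1 x).sub_const (E / 2)).mul (c2 x)).sub (((e2 x).div_const 2).mul (s2 x)) using 1
    rw [lin]
    ring
  have hβ : ∀ x, HasDerivAt (fun x => (g x - E / 2) * sin (2 * x) + g' x / 2 * cos (2 * x)) 0 x := by
    intro x
    convert! (((e1 x).sub_const (E / 2)).mul (s2 x)).add (((e2 x).div_const 2).mul (c2 x)) using 1
    rw [lin]
    ring
  obtain ⟨α, hα⟩ : ∃ α, ∀ x, (g x - E / 2) * cos (2 * x) - g' x / 2 * sin (2 * x) = α :=
    ⟨_, fun x => eq_const_of_hasDerivAt_zero hα x⟩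
  obtain ⟨β, hβ⟩ : ∃ β, ∀ x, (g x - E / 2) * sin (2 * x) + g' x / 2 * cos (2 * x) = β :=
    ⟨_, fun x => eq_const_of_hasDerivAt_zero hβ x⟩
  have form : ∀ x, g x = (E / 2 + α) * cos x ^ 2 + 2 * β * cos x * sin x + (E / 2 - α) * sin x ^ 2 := by
    intro x
    have t := sin_sq_add_cos_sq (2 * x)
    have t1 := sin_sq_add_cos_sq x
    have : g x = E / 2 + α * cos (2 * x) + β * sin (2 * x) := by
      rw [← hα x, ← hβ x]
      linear_combination -(g x - E / 2) * t
    rw [this, cos_two_mul', sin_two_mul]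
    linear_combination -(E / 2) * t1
  have hA : 0 < E / 2 + α := by
    have := form 0
    simp at this
    rw [← this]
    exact gpos 0
  refine ⟨E / 2 + α, β, E / 2 - α, hA, ?_, fun φ => ?_⟩
  · -- The form takes the value `A (A C - B²)` at the vector `(B, -A)`.
    obtain ⟨s, φ, hs, hsφ⟩ := exists_polar (β, -(E / 2 + α))
    simp only [uVec, Prod.smul_mk, smul_eq_mul, Prod.mk.injEq] at hsφ
    have hs' : 0 < s := by
      rcases hs.eq_or_lt with h | h
      · rw [← h] at hsφ
        linarith [hsφ.2]
      · exact h
    have hf := mul_pos (pow_pos hs' 2) (gpos φ)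
    rw [form φ] at hf
    have : s ^ 2 * ((E / 2 + α) * cos φ ^ 2 + 2 * β * cos φ * sin φ + (E / 2 - α) * sin φ ^ 2) =
        (E / 2 + α) * ((E / 2 + α) * (E / 2 - α) - β ^ 2) := by
      have a1 : s ^ 2 * ((E / 2 + α) * cos φ ^ 2 + 2 * β * cos φ * sin φ +
          (E / 2 - α) * sin φ ^ 2) = (E / 2 + α) * (s * cos φ) ^ 2 +
            2 * β * (s * cos φ) * (s * sin φ) + (E / 2 - α) * (s * sin φ) ^ 2 := by ring
      rw [a1, ← hsφ.1, ← hsφ.2]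
      ring
    rw [this] at hf
    exact (pos_iff_pos_of_mul_pos hf).1 hA
  · rw [← form]
    exact mul_inv_cancel₀ (pow_pos (hr φ) 2).ne'

/-- Completing the square, `A x² + 2 B x y + C y² = 1` is the image of the unit circle under an
upper triangular matrix. -/
theorem isEllipse_of_quadratic {A B C : ℝ} (hA : 0 < A) (hD : 0 < A * C - B ^ 2) :
    IsEllipse {p : ℝ × ℝ | A * p.1 ^ 2 + 2 * B * p.1 * p.2 + C * p.2 ^ 2 = 1} := by
  obtain ⟨a, ha, rfl⟩ : ∃ a, 0 < a ∧ A = a ^ 2 := ⟨√A, sqrt_pos.2 hA, (sq_sqrt hA.le).symm⟩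
  obtain ⟨d, hd, hdD⟩ : ∃ d, 0 < d ∧ a ^ 2 * C - B ^ 2 = d ^ 2 :=
    ⟨_, sqrt_pos.2 hD, (sq_sqrt hD.le).symm⟩
  obtain rfl : C = (d ^ 2 + B ^ 2) / a ^ 2 := by
    field_simp
    linarith
  set L : (ℝ × ℝ) →ₗ[ℝ] ℝ × ℝ :=
    { toFun := fun x => (x.1 / a - B / (a * d) * x.2, a / d * x.2)
      map_add' := fun x y => by ext <;> simp <;> ring
      map_smul' := fun c x => by ext <;> simp <;> ring } with hL
  have hLx : ∀ x, L x = (x.1 / a - B / (a * d) * x.2, a / d * x.2) := fun x => rfl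
  have inv : ∀ p : ℝ × ℝ, L (a * p.1 + B / a * p.2, d / a * p.2) = p := by
    intro p
    rw [hLx]
    ext
    · simp only
      field_simp
      ring
    · simp only
      field_simp
  have hsurj : Function.Surjective L := fun p => ⟨_, inv p⟩
  refine ⟨L, 0, ⟨LinearMap.injective_iff_surjective.2 hsurj, hsurj⟩, ?_⟩
  ext p
  constructor
  · intro hp
    refine ⟨(a * p.1 + B / a * p.2, d / a * p.2), ?_, by simp [inv]⟩
    simp only [mem_ofPred_eq] at hp ⊢
    rw [← hp]
    field_simp
    ring
  · rintro ⟨x, hx, rfl⟩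
    simp only [mem_ofPred_eq] at hx
    simp only [mem_ofPred_eq, zero_add, hLx]
    rw [← hx]
    field_simp
    ring

/-! ### Ellipses -/

/-- An ellipse is `{x | ‖M (x - z)‖ = 1}` with `M = (a, b; c, d)` invertible. -/
theorem IsEllipse.exists_matrix {C : Set (ℝ × ℝ)} (hC : IsEllipse C) :
    ∃ (a b c d : ℝ) (z : ℝ × ℝ), a * d - b * c ≠ 0 ∧ ∀ x : ℝ × ℝ, x ∈ C ↔
      (a * (x.1 - z.1) + b * (x.2 - z.2)) ^ 2 + (c * (x.1 - z.1) + d * (x.2 - z.2)) ^ 2 = 1 := by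
  obtain ⟨L, z, hL, rfl⟩ := hC
  set e := LinearEquiv.ofBijective L hL
  have hM : ∀ v : ℝ × ℝ, e.symm v = ((e.symm (1, 0)).1 * v.1 + (e.symm (0, 1)).1 * v.2,
      (e.symm (1, 0)).2 * v.1 + (e.symm (0, 1)).2 * v.2) := by
    intro v
    have : v = v.1 • ((1, 0) : ℝ × ℝ) + v.2 • ((0, 1) : ℝ × ℝ) := by ext <;> simp
    conv_lhs => rw [this, map_add, map_smul, map_smul]
    ext <;> simp <;> ring
  set a := (e.symm (1, 0)).1
  set b := (e.symm (0, 1)).1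
  set c := (e.symm (1, 0)).2
  set d := (e.symm (0, 1)).2
  have zero : ∀ v, e.symm v = 0 → v = 0 := fun v hv => by simpa using hv
  refine ⟨a, b, c, d, z, fun hdet => ?_, fun x => ?_⟩
  · have v1 := zero (d, -c) (by
      rw [hM]; ext
      · simp only [Prod.fst_zero]; linarith
      · simp only [Prod.snd_zero]; ring)
    have v2 := zero (b, -a) (by
      rw [hM]; ext
      · simp only [Prod.fst_zero]; ring
      · simp only [Prod.snd_zero]; linarith)
    simp only [Prod.mk_eq_zero, neg_eq_zero] at v1 v2
    have := zero (1, 0) (by rw [hM]; simp [v1.2, v2.2])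
    simp at this
  · have hx := hM (x - z)
    constructor
    · rintro ⟨y, hy, rfl⟩
      have : e.symm (z + L y - z) = y := by
        rw [add_sub_cancel_left]
        exact e.symm_apply_apply y
      simp only at hx
      rw [this] at hx
      rw [mem_ofPred_eq, hx] at hy
      simpa using! hy
    · intro h
      refine ⟨e.symm (x - z), ?_, ?_⟩
      · rw [hx]
        simpa using! h
      · have : L (e.symm (x - z)) = x - z := e.apply_symm_apply _
        simp only
        rw [this]
        simp

theorem exists_uVec {x y : ℝ} (h : x ^ 2 + y ^ 2 = 1) : ∃ θ, x = cos θ ∧ y = sin θ := by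
  obtain ⟨s, θ, hs, hsθ⟩ := exists_polar (x, y)
  simp only [uVec, Prod.smul_mk, smul_eq_mul, Prod.mk.injEq] at hsθ
  obtain ⟨rfl, rfl⟩ := hsθ
  have : s ^ 2 = 1 := by
    rw [← h]
    linear_combination -s ^ 2 * sin_sq_add_cos_sq θ
  have : s = 1 := by nlinarith
  exact ⟨θ, by rw [this, one_mul], by rw [this, one_mul]⟩

theorem cos_mul_add_sin_mul_le {x y ρ : ℝ} (hρ : 0 ≤ ρ) (h : x ^ 2 + y ^ 2 ≤ ρ ^ 2) (θ : ℝ) :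
    x * cos θ + y * sin θ ≤ ρ := by
  refine le_of_sq_le_sq ?_ hρ
  nlinarith [sq_nonneg (x * sin θ - y * cos θ), sin_sq_add_cos_sq θ]

theorem volume_disc :
    volume {w : ℝ × ℝ | w.1 ^ 2 + w.2 ^ 2 ≤ 1} = ENNReal.ofReal π := by
  have hm : MeasurableSet {w : ℝ × ℝ | w.1 ^ 2 + w.2 ^ 2 ≤ 1} :=
    (isClosed_le (by fun_prop) continuous_const).measurableSet
  have hsq : ∀ s φ : ℝ, (s * cos φ) ^ 2 + (s * sin φ) ^ 2 = s ^ 2 := fun s φ => by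
    linear_combination s ^ 2 * sin_sq_add_cos_sq φ
  have hI : (∫ _φ in (0:ℝ)..2 * π, (1:ℝ) ^ 2 / 2) = π := by
    simp
    ring
  conv_rhs => rw [← hI]
  refine le_antisymm ?_ ?_
  · refine volume_le_of_star hm (ρ := fun _ => 1) (by fun_prop) (fun _ => rfl)
      (fun _ => one_pos) ?_
    intro φ s hs h
    simp only [mem_ofPred_eq, uVec, Prod.smul_mk, smul_eq_mul, hsq] at h
    nlinarith
  · refine le_volume_of_star hm (ρ := fun _ => 1) (by fun_prop) (fun _ => rfl)
      (fun _ => one_pos) ?_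
    intro φ s hs h
    simp only [mem_ofPred_eq, uVec, Prod.smul_mk, smul_eq_mul, hsq]
    nlinarith

/-- If `0` is the Santaló point and `∂K = {x | ‖M (x - z)‖ = 1}`, then `M z = 0`. The polar dual at
the centre `z` has area `|det M| π`, whereas the one at `0` has area at least
`|det M| ½ ∫ (1 + ⟨u φ, M z⟩)⁻² dφ`, which exceeds `|det M| π` unless `M z = 0`. -/
theorem center_eq_zero {K : Set (ℝ × ℝ)} (hconv : Convex ℝ K) (hcl : IsClosed K)
    {r : ℝ → ℝ} (hbd : HasC2PosCurvBoundary K 0 r) (hsant : IsSantaloPoint K 0)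
    {a b c d : ℝ} {z : ℝ × ℝ} (hδ : a * d - b * c ≠ 0)
    (hfr : ∀ x : ℝ × ℝ, x ∈ frontier K ↔
      (a * (x.1 - z.1) + b * (x.2 - z.2)) ^ 2 + (c * (x.1 - z.1) + d * (x.2 - z.2)) ^ 2 = 1) :
    a * z.1 + b * z.2 = 0 ∧ c * z.1 + d * z.2 = 0 := by
  have hr := hbd.2.2.2.1
  have hγ : ∀ φ, (r φ * cos φ, r φ * sin φ) ∈ frontier K := by
    intro φ
    rw [hbd.2.2.2.2.2]
    exact ⟨φ, by simp [uVec]⟩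
  have hγ' : ∀ φ, (a * (r φ * cos φ) + b * (r φ * sin φ) - (a * z.1 + b * z.2)) ^ 2 +
      (c * (r φ * cos φ) + d * (r φ * sin φ) - (c * z.1 + d * z.2)) ^ 2 = 1 := by
    intro φ
    rw [← (hfr _).1 (hγ φ)]
    ring
  set e₁ := a * z.1 + b * z.2 with he₁
  set e₂ := c * z.1 + d * z.2 with he₂
  set δ := a * d - b * c with hδ'
  have hac : 0 < a ^ 2 + c ^ 2 := by
    rcases eq_or_ne a 0 with ha | ha
    · have : c ≠ 0 := by
        rintro rfl
        exact hδ (by rw [hδ', ha]; ring)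
      positivity
    · positivity
  -- Eliminating the linear terms between the equations of the boundary points in the directions `0`
  -- and `π` shows that the origin is inside the ellipse.
  have he : e₁ ^ 2 + e₂ ^ 2 < 1 := by
    have g0 := hγ' 0
    have g1 := hγ' π
    simp only [cos_zero, sin_zero, cos_pi, sin_pi, mul_one, mul_zero, add_zero] at g0 g1
    have : (r 0 + r π) * (e₁ ^ 2 + e₂ ^ 2 - 1 + r 0 * r π * (a ^ 2 + c ^ 2)) = 0 := by
      linear_combination r π * g0 + r 0 * g1
    have h2 := (mul_eq_zero.1 this).resolve_left (add_pos (hr 0) (hr π)).ne'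
    have h3 := mul_pos (mul_pos (hr 0) (hr π)) hac
    linarith
  have hlt : ∀ φ, 0 < 1 + (e₁ * cos φ + e₂ * sin φ) := by
    intro φ
    have h1 := cos_mul_add_sin_mul_le (x := -e₁) (y := -e₂) (ρ := √(e₁ ^ 2 + e₂ ^ 2))
      (sqrt_nonneg _) (by rw [sq_sqrt (by positivity)]; linarith) φ
    have h2 : √(e₁ ^ 2 + e₂ ^ 2) < 1 := by
      rw [sqrt_lt' one_pos]
      simpa using he
    linarith
  have hz : z ∈ interior K := by
    refine interior_maximal (t := {p : ℝ × ℝ | (a * (p.1 - z.1) + b * (p.2 - z.2)) ^ 2 +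
      (c * (p.1 - z.1) + d * (p.2 - z.2)) ^ 2 < 1}) ?_ (isOpen_lt (by fun_prop) continuous_const)
      (by simp)
    intro p hp
    simp only [mem_ofPred_eq] at hp
    -- The chord of the ellipse through `p` on which the second coordinate of `M x` is constant.
    set w₁ := a * (p.1 - z.1) + b * (p.2 - z.2) with hw₁
    set w₂ := c * (p.1 - z.1) + d * (p.2 - z.2) with hw₂
    have hs2 : 0 < 1 - w₂ ^ 2 := by nlinarith [sq_nonneg w₁]
    set s := √(1 - w₂ ^ 2) with hs
    have hs0 : 0 < s := sqrt_pos.2 hs2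
    have hss : s ^ 2 = 1 - w₂ ^ 2 := sq_sqrt hs2.le
    have hws := abs_le.1 (abs_le_of_sq_le_sq (show w₁ ^ 2 ≤ s ^ 2 by linarith [sq_nonneg w₁]) hs0.le)
    have hP : ∀ σ : ℝ, σ ^ 2 = s ^ 2 →
        (p.1 + (σ - w₁) * d / δ, p.2 - (σ - w₁) * c / δ) ∈ K := by
      intro σ hσ
      refine hcl.frontier_subset ((hfr _).2 ?_)
      have k1 : a * (p.1 + (σ - w₁) * d / δ - z.1) + b * (p.2 - (σ - w₁) * c / δ - z.2) = σ := by
        have : a * (p.1 + (σ - w₁) * d / δ - z.1) + b * (p.2 - (σ - w₁) * c / δ - z.2) =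
          w₁ + (σ - w₁) * (δ / δ) := by rw [hw₁]; simp only [hδ']; ring
        rw [this, div_self hδ]; ring
      have k2 : c * (p.1 + (σ - w₁) * d / δ - z.1) + d * (p.2 - (σ - w₁) * c / δ - z.2) = w₂ := by
        rw [hw₂]; ring
      simp only [k1, k2]
      linarith
    have := hconv (hP s rfl) (hP (-s) (by ring)) (a := (s + w₁) / (2 * s))
      (b := (s - w₁) / (2 * s)) (div_nonneg (by linarith [hws.1]) (by linarith))
      (div_nonneg (by linarith [hws.2]) (by linarith)) (by field_simp; ring)
    convert! this using 1
    ext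
    · simp only [Prod.smul_mk, smul_eq_mul, Prod.mk_add_mk]
      field_simp
      ring
    · simp only [Prod.smul_mk, smul_eq_mul, Prod.mk_add_mk]
      field_simp
      ring
  -- The inverse transpose of `M` carries both duals to sets that do not depend on `M`.
  set F : ℝ × ℝ → ℝ × ℝ := fun y =>
    (d / δ * y.1 + -c / δ * y.2, -b / δ * y.1 + a / δ * y.2) with hF
  have hFdet : d / δ * (a / δ) - -c / δ * (-b / δ) = δ⁻¹ := by
    field_simp
    rw [hδ']
    ring
  have hFvol : ∀ S, volume (F ⁻¹' S) = ENNReal.ofReal |δ| * volume S := by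
    intro S
    rw [hF, volume_preimage_matrix (by rw [hFdet]; exact inv_ne_zero hδ), hFdet, inv_inv]
  have pairing : ∀ y v : ℝ × ℝ, y.1 * v.1 + y.2 * v.2 =
      (F y).1 * (a * v.1 + b * v.2) + (F y).2 * (c * v.1 + d * v.2) := by
    intro y v
    have : (F y).1 * (a * v.1 + b * v.2) + (F y).2 * (c * v.1 + d * v.2) =
        (y.1 * v.1 + y.2 * v.2) * (δ / δ) := by
      simp only [hF, hδ']
      ring
    rw [this, div_self hδ, mul_one]
  have up : polarDual K z ⊆ F ⁻¹' {w : ℝ × ℝ | w.1 ^ 2 + w.2 ^ 2 ≤ 1} := by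
    intro y hy
    obtain ⟨s, θ, hs, hsθ⟩ := exists_polar (F y)
    have hmem : (z.1 + (d * cos θ - b * sin θ) / δ, z.2 + (-c * cos θ + a * sin θ) / δ) ∈ K := by
      refine hcl.frontier_subset ((hfr _).2 ?_)
      have k1 : a * (z.1 + (d * cos θ - b * sin θ) / δ - z.1) +
          b * (z.2 + (-c * cos θ + a * sin θ) / δ - z.2) = cos θ * (δ / δ) := by
        simp only [hδ']; ring
      have k2 : c * (z.1 + (d * cos θ - b * sin θ) / δ - z.1) +
          d * (z.2 + (-c * cos θ + a * sin θ) / δ - z.2) = sin θ * (δ / δ) := by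
        simp only [hδ']; ring
      simp only [k1, k2, div_self hδ, mul_one, cos_sq_add_sin_sq]
    have h1 := hy _ hmem
    simp only [add_sub_cancel_left] at h1
    have h2 : y.1 * ((d * cos θ - b * sin θ) / δ) + y.2 * ((-c * cos θ + a * sin θ) / δ) =
        (F y).1 * cos θ + (F y).2 * sin θ := by
      simp only [hF]
      ring
    rw [h2, hsθ] at h1
    simp only [uVec, Prod.smul_mk, smul_eq_mul] at h1
    have hs1 : s ≤ 1 := by nlinarith [sin_sq_add_cos_sq θ]
    simp only [mem_preimage, mem_ofPred_eq, hsθ, uVec, Prod.smul_mk, smul_eq_mul]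
    nlinarith [sin_sq_add_cos_sq θ]
  set W : Set (ℝ × ℝ) := {w | ∀ θ, w.1 * (cos θ + e₁) + w.2 * (sin θ + e₂) ≤ 1} with hW
  have down : F ⁻¹' W ⊆ polarDual K 0 := by
    intro y hy k hk
    obtain ⟨s, φ, hs, rfl⟩ := exists_polar k
    have hsr := hbd.le_of_smul_mem hconv hk
    obtain ⟨θ, h1, h2⟩ := exists_uVec (hγ' φ)
    have h3 := hy θ
    rw [← h1, ← h2, sub_add_cancel, sub_add_cancel,
      ← pairing y (r φ * cos φ, r φ * sin φ)] at h3
    simp only [uVec, Prod.smul_mk, smul_eq_mul, Prod.fst_zero, Prod.snd_zero, sub_zero]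
    have h4 : r φ * (y.1 * cos φ + y.2 * sin φ) ≤ 1 := by linarith
    rcases le_total (y.1 * cos φ + y.2 * sin φ) 0 with h | h
    · nlinarith
    · nlinarith
  set ρ : ℝ → ℝ := fun φ => (1 + (e₁ * cos φ + e₂ * sin φ))⁻¹ with hρ
  have hρc : Continuous ρ := by
    have : ∀ φ, 1 + (e₁ * cos φ + e₂ * sin φ) ≠ 0 := fun φ => (hlt φ).ne'
    simp only [hρ]
    fun_prop (disch := simpa using this)
  have hWcl : IsClosed W := by
    rw [hW, ofPred_forall]
    exact isClosed_iInter fun θ => isClosed_le (by fun_prop) continuous_const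
  have hWvol : ENNReal.ofReal (∫ φ in (0:ℝ)..2 * π, ρ φ ^ 2 / 2) ≤ volume W := by
    refine le_volume_of_star hWcl.measurableSet hρc (fun φ => by simp [hρ])
      (fun φ => inv_pos.2 (hlt φ)) ?_
    intro φ s hs hsρ θ
    simp only [uVec, Prod.smul_mk, smul_eq_mul]
    have h1 : s * (1 + (e₁ * cos φ + e₂ * sin φ)) ≤ 1 := by
      simp only [hρ] at hsρ
      rwa [← one_div, le_div_iff₀ (hlt φ)] at hsρ
    have h2 := mul_le_mul_of_nonneg_left (cos_le_one (φ - θ)) hs.le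
    rw [cos_sub] at h2
    linarith
  have hchain : ENNReal.ofReal |δ| * ENNReal.ofReal (∫ φ in (0:ℝ)..2 * π, ρ φ ^ 2 / 2) ≤
      ENNReal.ofReal |δ| * ENNReal.ofReal π :=
    calc _ ≤ ENNReal.ofReal |δ| * volume W := by gcongr
      _ = volume (F ⁻¹' W) := (hFvol W).symm
      _ ≤ volume (polarDual K 0) := measure_mono down
      _ ≤ volume (polarDual K z) := hsant.2 z hz
      _ ≤ volume (F ⁻¹' {w : ℝ × ℝ | w.1 ^ 2 + w.2 ^ 2 ≤ 1}) := measure_mono up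
      _ = _ := by rw [hFvol, volume_disc]
  have hδpos : 0 < |δ| := abs_pos.2 hδ
  rw [← ENNReal.ofReal_mul hδpos.le, ← ENNReal.ofReal_mul hδpos.le,
    ENNReal.ofReal_le_ofReal_iff (by positivity)] at hchain
  have hle := le_of_mul_le_mul_left hchain hδpos
  rw [intervalIntegral.integral_div] at hle
  -- `(1 + t)⁻² ≥ 1 - 2 t`, strictly for `t ≠ 0`, and `t = ⟨u φ, e⟩` has mean zero.
  have hid : ∀ φ, ρ φ ^ 2 - 1 + 2 * (e₁ * cos φ + e₂ * sin φ) =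
      (e₁ * cos φ + e₂ * sin φ) ^ 2 * (1 + 2 * (1 + (e₁ * cos φ + e₂ * sin φ))) * ρ φ ^ 2 := by
    intro φ
    have := (hlt φ).ne'
    simp only [hρ]
    field_simp
    ring
  have hint : (∫ φ in (0:ℝ)..2 * π, (ρ φ ^ 2 - 1 + 2 * (e₁ * cos φ + e₂ * sin φ))) =
      (∫ φ in (0:ℝ)..2 * π, ρ φ ^ 2) - 2 * π := by
    rw [intervalIntegral.integral_add, intervalIntegral.integral_sub,
      intervalIntegral.integral_const_mul, intervalIntegral.integral_add,
      intervalIntegral.integral_const_mul, intervalIntegral.integral_const_mul]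
    · simp
    all_goals exact Continuous.intervalIntegrable (by fun_prop) _ _
  have hzero : ∀ φ ∈ Icc 0 (2 * π), e₁ * cos φ + e₂ * sin φ = 0 := by
    by_contra! hne
    obtain ⟨φ, hφ, hφne⟩ := hne
    have hρpos : ∀ φ, 0 < ρ φ := fun φ => inv_pos.2 (hlt φ)
    have : 0 < ∫ φ in (0:ℝ)..2 * π, (ρ φ ^ 2 - 1 + 2 * (e₁ * cos φ + e₂ * sin φ)) := by
      refine intervalIntegral.integral_pos (by positivity) (by fun_prop) (fun x _ => ?_)
        ⟨φ, hφ, ?_⟩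
      · rw [hid]
        have := hlt x
        positivity
      · rw [hid]
        have := hlt φ
        have := hρpos φ
        positivity
    linarith
  have hpi := Real.pi_pos
  have z0 := hzero 0 ⟨le_rfl, by positivity⟩
  have z1 := hzero (π / 2) ⟨by positivity, by linarith⟩
  simp at z0 z1
  exact ⟨z0, z1⟩

/-- If `r⁻² = ‖M u(φ)‖²` with `M = (a, b; c, d)`, then `χ = (det M)² r⁶`. -/
theorem chi_eq_of_quadratic {r r' r'' : ℝ → ℝ} (d1 : ∀ x, HasDerivAt r (r' x) x)
    (d2 : ∀ x, HasDerivAt r' (r'' x) x) (hr : ∀ x, 0 < r x) {a b c d : ℝ}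
    (hG : ∀ x, r x ^ 2 * ((a * cos x + b * sin x) ^ 2 + (c * cos x + d * sin x) ^ 2) = 1) (x : ℝ) :
    r x ^ 2 + 2 * r' x ^ 2 - r x * r'' x = (a * d - b * c) ^ 2 * r x ^ 6 := by
  set G : ℝ → ℝ := fun x => (a * cos x + b * sin x) ^ 2 + (c * cos x + d * sin x) ^ 2 with hG0
  set G' : ℝ → ℝ := fun x => 2 * ((a * cos x + b * sin x) * (b * cos x - a * sin x) +
    (c * cos x + d * sin x) * (d * cos x - c * sin x)) with hG1
  set G'' : ℝ → ℝ := fun x => 2 * ((b * cos x - a * sin x) ^ 2 + (d * cos x - c * sin x) ^ 2) -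
    2 * G x with hG2
  have l1 : ∀ a b x : ℝ, HasDerivAt (fun x => a * cos x + b * sin x) (b * cos x - a * sin x) x := by
    intro a b x
    convert! ((hasDerivAt_cos x).const_mul a).add ((hasDerivAt_sin x).const_mul b) using 1
    ring
  have l2 : ∀ a b x : ℝ, HasDerivAt (fun x => b * cos x - a * sin x) (-(a * cos x + b * sin x)) x := by
    intro a b x
    convert! ((hasDerivAt_cos x).const_mul b).sub ((hasDerivAt_sin x).const_mul a) using 1
    ring
  have g1 : ∀ x, HasDerivAt G (G' x) x := by
    intro x
    convert! ((l1 a b x).pow 2).add ((l1 c d x).pow 2) using 1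
    simp only [hG1]
    norm_num
    ring
  have g2 : ∀ x, HasDerivAt G' (G'' x) x := by
    intro x
    convert! (((l1 a b x).mul (l2 a b x)).add ((l1 c d x).mul (l2 c d x))).const_mul 2 using 1
    simp only [hG2, hG0]
    ring
  have hr' : ∀ x, r' x = -(r x ^ 3 * G' x) / 2 := by
    intro x
    have h1 := ((d1 x).pow 2).mul (g1 x)
    have h2 : (r ^ 2 * G) = fun _ => (1:ℝ) := funext hG
    rw [h2] at h1
    have h3 := h1.unique (hasDerivAt_const x 1)
    norm_num at h3
    have h4 := (hr x).ne'
    have h5 : r x ^ 2 * G x = 1 := hG x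
    linear_combination (r x / 2) * h3 - r' x * h5
  have hr'' : r'' x = -(3 * r x ^ 2 * r' x * G' x + r x ^ 3 * G'' x) / 2 := by
    have h1 := ((((d1 x).pow 3).mul (g2 x)).neg).div_const 2
    have h2 : r' = fun x => -(r ^ 3 * G') x / 2 := funext hr'
    have h3 := d2 x
    rw [h2] at h3
    rw [h3.unique h1]
    norm_num
  have h5 : r x ^ 2 * G x = 1 := hG x
  have key : G x ^ 2 - G' x ^ 2 / 4 + G x * G'' x / 2 = (a * d - b * c) ^ 2 := by
    simp only [hG2, hG1, hG0]
    linear_combination (a * d - b * c) ^ 2 * (sin x ^ 2 + cos x ^ 2 + 1) * sin_sq_add_cos_sq x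
  rw [hr'', hr' x, ← key]
  linear_combination -(r x ^ 2 * (r x ^ 2 * G x + 1) + r x ^ 4 * G'' x / 2) * h5

/-! ### The integral inequality -/

theorem HasC2PosCurvBoundary.deriv_periodic {K : Set (ℝ × ℝ)} {O : ℝ × ℝ} {r : ℝ → ℝ}
    (hbd : HasC2PosCurvBoundary K O r) :
    Function.Periodic (deriv r) (2 * π) ∧ Function.Periodic (deriv (deriv r)) (2 * π) := by
  have h : ∀ f : ℝ → ℝ, Function.Periodic f (2 * π) → Function.Periodic (deriv f) (2 * π) := by
    intro f hf x
    rw [← deriv_comp_add_const, show (fun x => f (x + 2 * π)) = f from funext hf]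
  have h1 := h r hbd.2.2.1
  exact ⟨h1, h _ h1⟩

/-- If `√χ / r²` and `r` are proportional, then `χ = t² r⁶` and `∂K` is an ellipse. -/
theorem isEllipse_of_chi {K : Set (ℝ × ℝ)} {r : ℝ → ℝ} (hbd : HasC2PosCurvBoundary K 0 r) {t : ℝ}
    (h : ∀ φ ∈ Icc 0 (2 * π),
      √(r φ ^ 2 + 2 * (deriv r φ) ^ 2 - r φ * deriv (deriv r) φ) / r φ ^ 2 = t * r φ) :
    IsEllipse (frontier K) := by
  obtain ⟨d1, d2, -⟩ := hbd.hasDerivAt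
  obtain ⟨p1, p2⟩ := hbd.deriv_periodic
  have hr := hbd.2.2.2.1
  have hp := hbd.2.2.1
  have hχ := hbd.2.2.2.2.1
  have hper : Function.Periodic (fun φ =>
      (r φ ^ 2 + 2 * (deriv r φ) ^ 2 - r φ * deriv (deriv r) φ) / r φ ^ 6) (2 * π) := by
    intro φ
    simp only [hp φ, p1 φ, p2 φ]
  have heq : ∀ φ, r φ ^ 2 + 2 * (deriv r φ) ^ 2 - r φ * deriv (deriv r) φ = t ^ 2 * r φ ^ 6 := by
    intro φ
    obtain ⟨ψ, hψ, hφψ⟩ := hper.exists_mem_Ico₀ (by positivity) φ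
    have h1 := h ψ ⟨hψ.1, hψ.2.le⟩
    rw [div_eq_iff (pow_pos (hr ψ) 2).ne'] at h1
    have h2 := sq_sqrt (hχ ψ).le
    rw [h1] at h2
    rw [← h2, div_eq_iff (pow_pos (hr φ) 6).ne'] at hφψ
    rw [hφψ]
    have := (hr ψ).ne'
    field_simp
  obtain ⟨A, B, C, hA, hD, hform⟩ := exists_quadratic d1 d2 hr heq
  have hset : frontier K = {p : ℝ × ℝ | A * p.1 ^ 2 + 2 * B * p.1 * p.2 + C * p.2 ^ 2 = 1} := by
    rw [hbd.2.2.2.2.2]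
    ext p
    constructor
    · rintro ⟨φ, rfl⟩
      have := hform φ
      simp only [uVec, zero_add, Prod.smul_mk, smul_eq_mul, mem_ofPred_eq]
      linarith
    · intro hp
      obtain ⟨s, φ, hs, rfl⟩ := exists_polar p
      simp only [uVec, Prod.smul_mk, smul_eq_mul, mem_ofPred_eq] at hp
      have h1 := hform φ
      set G := A * cos φ ^ 2 + 2 * B * cos φ * sin φ + C * sin φ ^ 2
      have h2 : s ^ 2 * G = 1 := by rw [← hp]; ring
      have hG : G ≠ 0 := by
        intro h0
        simp [h0] at h1
      have h3 : s ^ 2 = r φ ^ 2 := mul_right_cancel₀ hG (h2.trans h1.symm)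
      have h4 : s = r φ := by
        rwa [sq_eq_sq₀ hs (hr φ).le] at h3
      exact ⟨φ, by rw [h4, zero_add]⟩
  rw [hset]
  exact isEllipse_of_quadratic hA hD

/-- For an ellipse the Santaló point is the centre, `χ = (det M)² r⁶`, and the integral is
`|det M| ∫ r²`, that is `2 |det M|` times the area of the ellipse. -/
theorem integral_eq_of_isEllipse {K : Set (ℝ × ℝ)} (hconv : Convex ℝ K) (hcl : IsClosed K)
    {r : ℝ → ℝ} (hbd : HasC2PosCurvBoundary K 0 r) (hsant : IsSantaloPoint K 0)
    (hell : IsEllipse (frontier K)) :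
    (∫ φ in (0:ℝ)..2 * π,
      √(r φ ^ 2 + 2 * (deriv r φ) ^ 2 - r φ * deriv (deriv r) φ) / r φ) = 2 * π := by
  obtain ⟨d1, d2, -⟩ := hbd.hasDerivAt
  have hr := hbd.2.2.2.1
  obtain ⟨a, b, c, d, z, hδ, hfr⟩ := hell.exists_matrix
  obtain ⟨z1, z2⟩ := center_eq_zero hconv hcl hbd hsant hδ hfr
  have hG : ∀ φ, r φ ^ 2 * ((a * cos φ + b * sin φ) ^ 2 + (c * cos φ + d * sin φ) ^ 2) = 1 := by
    intro φ
    have hγ : r φ • uVec φ ∈ frontier K := by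
      rw [hbd.2.2.2.2.2]
      exact ⟨φ, by simp⟩
    have h1 := (hfr _).1 hγ
    simp only [uVec, Prod.smul_mk, smul_eq_mul] at h1
    have e1 : a * (r φ * cos φ - z.1) + b * (r φ * sin φ - z.2) =
        r φ * (a * cos φ + b * sin φ) := by linear_combination -z1
    have e2 : c * (r φ * cos φ - z.1) + d * (r φ * sin φ - z.2) =
        r φ * (c * cos φ + d * sin φ) := by linear_combination -z2
    rw [e1, e2] at h1
    linarith
  have hint : ∀ φ, √(r φ ^ 2 + 2 * (deriv r φ) ^ 2 - r φ * deriv (deriv r) φ) / r φ =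
      |a * d - b * c| * r φ ^ 2 := by
    intro φ
    have h3 := hr φ
    rw [chi_eq_of_quadratic d1 d2 hr hG φ, show (a * d - b * c) ^ 2 * r φ ^ 6 =
      ((a * d - b * c) * r φ ^ 3) ^ 2 by ring, sqrt_sq_eq_abs, abs_mul,
      abs_of_pos (pow_pos h3 3), div_eq_iff h3.ne']
    ring
  simp only [hint]
  rw [intervalIntegral.integral_const_mul]
  set S : Set (ℝ × ℝ) := (fun p : ℝ × ℝ => (a * p.1 + b * p.2, c * p.1 + d * p.2)) ⁻¹'
    {w : ℝ × ℝ | w.1 ^ 2 + w.2 ^ 2 ≤ 1} with hS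
  have hSm : MeasurableSet S := by
    refine (IsClosed.preimage (by fun_prop) ?_).measurableSet
    exact isClosed_le (by fun_prop) continuous_const
  have hmem : ∀ φ s, 0 < s → (s • uVec φ ∈ S ↔ s ≤ r φ) := by
    intro φ s hs
    simp only [hS, mem_preimage, mem_ofPred_eq, uVec, Prod.smul_mk, smul_eq_mul]
    have h1 := hG φ
    set G := (a * cos φ + b * sin φ) ^ 2 + (c * cos φ + d * sin φ) ^ 2
    have h2 : (a * (s * cos φ) + b * (s * sin φ)) ^ 2 + (c * (s * cos φ) + d * (s * sin φ)) ^ 2 =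
        s ^ 2 * G := by ring
    have hGpos : 0 < G := (pos_iff_pos_of_mul_pos (by rw [h1]; exact one_pos)).1 (pow_pos (hr φ) 2)
    rw [h2, ← h1, mul_le_mul_iff_left₀ hGpos, sq_le_sq₀ hs.le (hr φ).le]
  have v1 : volume S = ENNReal.ofReal (∫ φ in (0:ℝ)..2 * π, r φ ^ 2 / 2) :=
    le_antisymm
      (volume_le_of_star hSm hbd.2.1.continuous hbd.2.2.1 hr fun φ s hs h => (hmem φ s hs).1 h)
      (le_volume_of_star hSm hbd.2.1.continuous hbd.2.2.1 hr fun φ s hs h => (hmem φ s hs).2 h)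
  rw [hS, volume_preimage_matrix hδ, volume_disc, ← ENNReal.ofReal_mul (abs_nonneg _),
    ENNReal.ofReal_eq_ofReal_iff (by positivity)
      (intervalIntegral.integral_nonneg (by positivity) fun φ _ => by positivity),
    intervalIntegral.integral_div, abs_inv, inv_mul_eq_div, div_eq_iff (abs_pos.2 hδ).ne'] at v1
  linarith

/-- If the origin is the Santalo point of `K`, then
`∫₀^{2π} √χ / r dφ ≤ 2π`, with equality if and only if `∂K` is an ellipse. -/
theorem santalo_point_integral_upper_bound
    (K : Set (ℝ × ℝ)) (hconv : Convex ℝ K) (hcomp : IsCompact K)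
    (hint : (interior K).Nonempty)
    (r : ℝ → ℝ) (hbd : HasC2PosCurvBoundary K 0 r)
    (hsant : IsSantaloPoint K 0) :
    (∫ φ in (0:ℝ)..(2 * π),
        Real.sqrt (r φ ^ 2 + 2 * (deriv r φ) ^ 2 - r φ * deriv (deriv r) φ) / r φ) ≤ 2 * π ∧
    ((∫ φ in (0:ℝ)..(2 * π),
        Real.sqrt (r φ ^ 2 + 2 * (deriv r φ) ^ 2 - r φ * deriv (deriv r) φ) / r φ) = 2 * π
      ↔ IsEllipse (frontier K)) := by
  obtain ⟨d1, d2, hc⟩ := hbd.hasDerivAt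
  have hr := hbd.2.2.2.1
  have hχ := hbd.2.2.2.2.1
  have hrc : Continuous r := hbd.2.1.continuous
  have hrc' : Continuous (deriv r) := continuous_iff_continuousAt.2 fun x => (d2 x).continuousAt
  have h2pi : (0:ℝ) < 2 * π := by positivity
  have hprod := integral_mul_integral_le hconv hcomp hint hbd hsant
  set p : ℝ → ℝ := fun φ =>
    √(r φ ^ 2 + 2 * (deriv r φ) ^ 2 - r φ * deriv (deriv r) φ) / r φ ^ 2 with hp
  have hpc : Continuous p := by
    have : ∀ x, r x ^ 2 ≠ 0 := fun x => (pow_pos (hr x) 2).ne'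
    exact Continuous.div (by fun_prop) (by fun_prop) this
  -- The factorisation `√χ / r = (√χ / r²) r`.
  obtain ⟨cs, cseq⟩ := integral_mul_sq_le hpc hrc hr h2pi
  have hpq : ∀ φ, p φ * r φ =
      √(r φ ^ 2 + 2 * (deriv r φ) ^ 2 - r φ * deriv (deriv r) φ) / r φ := by
    intro φ
    have := (hr φ).ne'
    simp only [hp]
    field_simp
  have hp2 : ∀ φ, p φ ^ 2 =
      (r φ ^ 2 + 2 * (deriv r φ) ^ 2 - r φ * deriv (deriv r) φ) / r φ ^ 4 := by
    intro φ
    simp only [hp]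
    rw [div_pow, sq_sqrt (hχ φ).le]
    ring
  simp only [hpq, hp2] at cs cseq
  refine ⟨?_, fun h => ?_, integral_eq_of_isEllipse hconv hcomp.isClosed hbd hsant⟩
  · exact le_of_sq_le_sq (by linarith) h2pi.le
  · obtain ⟨t, ht⟩ := cseq (by rw [h]; linarith)
    exact isEllipse_of_chi hbd ht
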